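/- arXiv:2602.11486 — 2 statements merged into one kernel-verified Lean document; each statement's English description precedes it below -/
import Mathlib

section
/- For all constants 0 < δ ≤ Δ there exist c > 0 and T₀ ∈ ℕ such that: for every integer k ≥ 2, every Alice value density v_A, every deterministic Alice strategy for the repeated k-cut game, and every horizon T ≥ T₀, there exists a Bob value density v_B (measurable, bounded above and below by positive constants depending only on δ and Δ, with total integral 1) such that Alice's Stackelberg regret against the myopic Bob with value density v_B over horizon T is at least c·√T/k^{3/2}. -/
open MeasureTheory Set

noncomputable section

attribute [local instance] Classical.propDecidable

/-- A value density: measurable, bounded in `[δ, Δ]` on `[0,1]`, integrating to 1 on `[0,1]`. -/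
def IsValueDensity (δ Δ : ℝ) (v : ℝ → ℝ) : Prop :=
  Measurable v ∧ (∀ x ∈ Set.Icc (0:ℝ) 1, v x ∈ Set.Icc δ Δ) ∧
    (∫ x in Set.Icc (0:ℝ) 1, v x) = 1

/-- The value of a piece `S` under density `v`. -/
def pieceVal (v : ℝ → ℝ) (S : Set ℝ) : ℝ := ∫ x in S, v x

/-- Extended cut points: `0, c 0, …, c (k-1), 1`. -/
def extCuts (k : ℕ) (c : Fin k → ℝ) : ℕ → ℝ := fun i =>
  if i = 0 then 0 else if h : i - 1 < k then c ⟨i - 1, h⟩ else 1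

/-- A valid vector of `k` cut points: nondecreasing, within `[0,1]`. -/
def ValidCuts (k : ℕ) (c : Fin k → ℝ) : Prop :=
  Monotone c ∧ ∀ i, c i ∈ Set.Icc (0:ℝ) 1

/-- The two pieces of the alternating partition induced by cuts `c`:
`true` gives the union of even-indexed intervals, `false` the odd-indexed ones. -/
def altPiece (k : ℕ) (c : Fin k → ℝ) (b : Bool) : Set ℝ :=
  ⋃ i ∈ Finset.range (k + 1),
    if decide (i % 2 = 0) = b then Set.Icc (extCuts k c i) (extCuts k c (i + 1)) else ∅

/-- Alice's Stackelberg value with `k` cuts: max of `V_A(Z_A)` over alternating partitions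
`(Z_A, Z_B)` induced by `k` cut points with `V_B(Z_B) ≥ 1/2`. -/
def stackelbergValue (k : ℕ) (vA vB : ℝ → ℝ) : ℝ :=
  sSup { u : ℝ | ∃ (c : Fin k → ℝ) (b : Bool), ValidCuts k c ∧
    1 / 2 ≤ pieceVal vB (altPiece k c (!b)) ∧ u = pieceVal vA (altPiece k c b) }

/-- A history of play: the list of (Alice's cuts, Bob's choice) in past rounds. -/
abbrev Hist (k : ℕ) := List ((Fin k → ℝ) × Bool)

/-- Alice's deterministic strategy: horizon and history ↦ next cut vector. -/
abbrev AliceStrategy (k : ℕ) := ℕ → Hist k → (Fin k → ℝ)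

/-- Bob's deterministic strategy: horizon, history, and Alice's current cuts ↦ choice. -/
abbrev BobStrategy (k : ℕ) := ℕ → Hist k → (Fin k → ℝ) → Bool

/-- The history of play after `t` rounds. -/
def playHist (k : ℕ) (SA : AliceStrategy k) (SB : BobStrategy k) (T : ℕ) : ℕ → Hist k
  | 0 => []
  | t + 1 =>
      let h := playHist k SA SB T t
      let cuts := SA T h
      h ++ [(cuts, SB T h cuts)]

/-- Alice's cuts in round `t` (0-indexed). -/
def roundCuts (k : ℕ) (SA : AliceStrategy k) (SB : BobStrategy k) (T t : ℕ) : Fin k → ℝ :=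
  SA T (playHist k SA SB T t)

/-- Bob's choice in round `t` (0-indexed). -/
def roundChoice (k : ℕ) (SA : AliceStrategy k) (SB : BobStrategy k) (T t : ℕ) : Bool :=
  SB T (playHist k SA SB T t) (roundCuts k SA SB T t)

/-- Alice's Stackelberg regret over horizon `T`: in each round she receives the value of
the piece Bob did not choose. -/
def aliceRegret (k : ℕ) (vA vB : ℝ → ℝ) (SA : AliceStrategy k) (SB : BobStrategy k)
    (T : ℕ) : ℝ :=
  ∑ t ∈ Finset.range T,
    (stackelbergValue k vA vB -
      pieceVal vA (altPiece k (roundCuts k SA SB T t) (!(roundChoice k SA SB T t))))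

/-- Bob's regret over horizon `T` relative to always choosing his preferred piece. -/
def bobRegret (k : ℕ) (vB : ℝ → ℝ) (SA : AliceStrategy k) (SB : BobStrategy k) (T : ℕ) : ℝ :=
  ∑ t ∈ Finset.range T,
    (max (pieceVal vB (altPiece k (roundCuts k SA SB T t) true))
        (pieceVal vB (altPiece k (roundCuts k SA SB T t) false)) -
      pieceVal vB (altPiece k (roundCuts k SA SB T t) (roundChoice k SA SB T t)))

/-- Bob's strategy guarantees regret at most `R T` against every Alice strategy and horizon. -/
def BobGuarantees (k : ℕ) (vB : ℝ → ℝ) (SB : BobStrategy k) (R : ℕ → ℝ) : Prop :=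
  ∀ (SA : AliceStrategy k) (T : ℕ), bobRegret k vB SA SB T ≤ R T

/-- The myopic Bob: chooses the piece of larger `V_B`-value, breaking ties towards
the piece of smaller `V_A`-value. -/
def myopicBob (k : ℕ) (vA vB : ℝ → ℝ) : BobStrategy k := fun _ _ c =>
  if pieceVal vB (altPiece k c false) < pieceVal vB (altPiece k c true) then true
  else if pieceVal vB (altPiece k c true) < pieceVal vB (altPiece k c false) then false
  else if pieceVal vA (altPiece k c true) ≤ pieceVal vA (altPiece k c false) then true
  else false

/-- Alice's strategy always produces valid cut vectors. -/
def AliceValid (k : ℕ) (SA : AliceStrategy k) : Prop := ∀ T h, ValidCuts k (SA T h)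

/-! ### Index function of a cut vector -/

/-- Number of cuts strictly to the left of `x`. -/
def cutIdx {k : ℕ} (c : Fin k → ℝ) (x : ℝ) : ℕ :=
  (Finset.univ.filter (fun i => c i < x)).card

/-- Half-open version of the alternating pieces. -/
def hPiece {k : ℕ} (c : Fin k → ℝ) (b : Bool) : Set ℝ :=
  {x | x ∈ Set.Icc (0:ℝ) 1 ∧ decide (cutIdx c x % 2 = 0) = b}

lemma cutIdx_mono {k : ℕ} (c : Fin k → ℝ) : Monotone (cutIdx c) := by
  intro x y hxy
  apply Finset.card_le_card
  intro i hi
  simp only [Finset.mem_filter, Finset.mem_univ, true_and] at hi ⊢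
  linarith

lemma cutIdx_le {k : ℕ} (c : Fin k → ℝ) (x : ℝ) : cutIdx c x ≤ k := by
  have := Finset.card_le_univ (Finset.univ.filter (fun i => c i < x))
  simpa [cutIdx] using this

lemma lt_cutIdx {k : ℕ} {c : Fin k → ℝ} (hc : Monotone c) (x : ℝ) (j : Fin k) :
    c j < x ↔ (j : ℕ) < cutIdx c x := by
  constructor
  · intro h
    have : (Finset.Iic j) ⊆ Finset.univ.filter (fun i => c i < x) := by
      intro i hi
      simp only [Finset.mem_filter, Finset.mem_univ, true_and, Finset.mem_Iic] at hi ⊢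
      exact lt_of_le_of_lt (hc hi) h
    have := Finset.card_le_card this
    rw [Fin.card_Iic] at this
    unfold cutIdx
    omega
  · intro h
    by_contra h'
    have : Finset.univ.filter (fun i => c i < x) ⊆ (Finset.Iio j) := by
      intro i hi
      simp only [Finset.mem_filter, Finset.mem_univ, true_and, Finset.mem_Iio] at hi ⊢
      by_contra h2
      exact h' (lt_of_le_of_lt (hc (not_lt.mp h2)) hi)
    have := Finset.card_le_card this
    rw [Fin.card_Iio] at this
    unfold cutIdx at h
    omega

lemma cutIdx_eq_of {k : ℕ} {c : Fin k → ℝ} {x : ℝ} {n : ℕ} (hn : n ≤ k)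
    (h : ∀ i : Fin k, c i < x ↔ (i : ℕ) < n) : cutIdx c x = n := by
  unfold cutIdx
  have : (Finset.univ.filter (fun i => c i < x)) =
      (Finset.univ.filter (fun i : Fin k => (i : ℕ) < n)) := by
    ext i; simp [h i]
  rw [this, Fin.card_filter_val_lt]
  simpa using hn

lemma measurable_cutIdx {k : ℕ} (c : Fin k → ℝ) : Measurable (cutIdx c) :=
  (cutIdx_mono c).measurable

lemma measurableSet_hPiece {k : ℕ} (c : Fin k → ℝ) (b : Bool) : MeasurableSet (hPiece c b) := by
  have : hPiece c b = Set.Icc (0:ℝ) 1 ∩ (cutIdx c) ⁻¹' {n | decide (n % 2 = 0) = b} := by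
    ext x; simp [hPiece]
  rw [this]
  exact measurableSet_Icc.inter (measurable_cutIdx c (MeasurableSet.of_discrete))

lemma hPiece_subset {k : ℕ} (c : Fin k → ℝ) (b : Bool) : hPiece c b ⊆ Set.Icc (0:ℝ) 1 :=
  fun _ hx => hx.1

lemma hPiece_not {k : ℕ} (c : Fin k → ℝ) (b : Bool) :
    hPiece c (!b) = Set.Icc (0:ℝ) 1 \ hPiece c b := by
  ext x
  simp only [hPiece, Set.mem_ofPred_eq, Set.mem_sdiff]
  cases b <;> simp <;> tauto

lemma extCuts_succ (k : ℕ) (c : Fin k → ℝ) (i : ℕ) :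
    extCuts k c (i + 1) = if h : i < k then c ⟨i, h⟩ else 1 := by
  simp [extCuts]

lemma mem_altPiece_iff {k : ℕ} {c : Fin k → ℝ} (hc : ValidCuts k c) (b : Bool) {x : ℝ}
    (hx : ∀ i, x ≠ c i) : x ∈ altPiece k c b ↔ x ∈ hPiece c b := by
  have hmem : ∀ i, i ≤ k → (x ∈ Set.Icc (extCuts k c i) (extCuts k c (i+1)) ↔
      (x ∈ Set.Icc (0:ℝ) 1 ∧ cutIdx c x = i)) := by
    intro i hi
    constructor
    · rintro ⟨h1, h2⟩
      have hlow : ∀ j : Fin k, (j:ℕ) < i → c j < x := by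
        intro j hj
        have hi0 : i ≠ 0 := by omega
        have hik : i - 1 < k := by omega
        simp only [extCuts, hi0, if_false, hik, dif_pos] at h1
        refine lt_of_le_of_ne (le_trans (hc.1 ?_) h1) (Ne.symm (hx j))
        show (j:ℕ) ≤ i - 1
        omega
      have hhigh : ∀ j : Fin k, i ≤ (j:ℕ) → x ≤ c j := by
        intro j hj
        have hik : i < k := lt_of_le_of_lt hj j.2
        simp [extCuts, hik] at h2
        exact h2.trans (hc.1 hj)
      refine ⟨⟨?_, ?_⟩, ?_⟩
      · refine le_trans ?_ h1
        unfold extCuts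
        split_ifs
        · exact le_rfl
        · exact (hc.2 _).1
        · norm_num
      · refine le_trans h2 ?_
        rw [extCuts_succ]
        split_ifs
        · exact (hc.2 _).2
        · norm_num
      · apply cutIdx_eq_of hi
        intro j
        constructor
        · intro h
          by_contra h'
          exact absurd (hhigh j (not_lt.mp h')) (not_le.mpr h)
        · exact hlow j
    · rintro ⟨⟨h0, h1⟩, hidx⟩
      constructor
      · unfold extCuts
        split_ifs with h2 h3
        · exact h0
        · refine le_of_lt ((lt_cutIdx hc.1 x _).2 ?_)
          show i - 1 < _
          omega
        · omega
      · rw [extCuts_succ]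
        split_ifs with h3
        · rw [← not_lt, lt_cutIdx hc.1]
          show ¬ (i < _)
          omega
        · exact h1
  unfold altPiece hPiece
  simp only [Set.mem_iUnion, Finset.mem_range, Set.mem_ofPred_eq]
  constructor
  · rintro ⟨i, hi, h⟩
    split_ifs at h with hb
    · have := (hmem i (by omega)).1 h
      refine ⟨this.1, ?_⟩
      rw [this.2]; exact hb
    · exact absurd h (by simp)
  · rintro ⟨h1, h2⟩
    have hle := cutIdx_le c x
    refine ⟨cutIdx c x, by omega, ?_⟩
    rw [if_pos h2]
    exact (hmem _ hle).2 ⟨h1, rfl⟩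

lemma pieceVal_alt {k : ℕ} {c : Fin k → ℝ} (hc : ValidCuts k c) (b : Bool) (v : ℝ → ℝ) :
    pieceVal v (altPiece k c b) = ∫ x in hPiece c b, v x := by
  unfold pieceVal
  apply setIntegral_congr_set
  have hfin : (Set.range c).Finite := Set.finite_range c
  have h0 : ∀ᵐ x ∂(volume : Measure ℝ), x ∉ Set.range c := by
    rw [ae_iff]
    simp only [not_not]
    exact hfin.measure_zero volume
  filter_upwards [h0] with x hx
  apply propext
  apply mem_altPiece_iff hc b
  intro i hi
  exact hx ⟨i, hi.symm⟩

/-! ### Elementary integral facts -/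

lemma intOn_of_bdd {v : ℝ → ℝ} (hm : Measurable v) {C : ℝ}
    (hb : ∀ x ∈ Set.Icc (0:ℝ) 1, |v x| ≤ C) {S : Set ℝ} (hS : S ⊆ Set.Icc (0:ℝ) 1) :
    IntegrableOn v S := by
  have h : IntegrableOn v (Set.Icc (0:ℝ) 1) := by
    apply Measure.integrableOn_of_bounded (M := C)
    · simp
    · exact hm.aestronglyMeasurable
    · filter_upwards [ae_restrict_mem measurableSet_Icc] with x hx
      simpa using hb x hx
  exact h.mono_set hS

lemma den_intOn {δ Δ : ℝ} {v : ℝ → ℝ} (hv : IsValueDensity δ Δ v) {S : Set ℝ}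
    (hS : S ⊆ Set.Icc (0:ℝ) 1) : IntegrableOn v S := by
  apply intOn_of_bdd hv.1 (C := max |δ| |Δ|) _ hS
  intro x hx
  exact abs_le_max_abs_abs (hv.2.1 x hx).1 (hv.2.1 x hx).2

lemma den_nonneg {δ Δ : ℝ} {v : ℝ → ℝ} (hδ : 0 < δ) (hv : IsValueDensity δ Δ v) {S : Set ℝ}
    (hS : S ⊆ Set.Icc (0:ℝ) 1) (hm : MeasurableSet S) : 0 ≤ ∫ x in S, v x :=
  setIntegral_nonneg hm (fun x hx => hδ.le.trans (hv.2.1 x (hS hx)).1)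

lemma den_mono {δ Δ : ℝ} {v : ℝ → ℝ} (hδ : 0 < δ) (hv : IsValueDensity δ Δ v) {S S' : Set ℝ}
    (hS : S' ⊆ Set.Icc (0:ℝ) 1) (hm : MeasurableSet S') (hSS : S ⊆ S') :
    ∫ x in S, v x ≤ ∫ x in S', v x := by
  apply setIntegral_mono_set (den_intOn hv hS)
  · filter_upwards [ae_restrict_mem hm] with x hx
    exact hδ.le.trans (hv.2.1 x (hS hx)).1
  · exact LE.le.eventuallyLE hSS

lemma den_Ioc_lower {δ Δ : ℝ} {v : ℝ → ℝ} (hv : IsValueDensity δ Δ v) {x y : ℝ}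
    (hx : 0 ≤ x) (hxy : x ≤ y) (hy : y ≤ 1) : δ * (y - x) ≤ ∫ z in Set.Ioc x y, v z := by
  have hS : Set.Ioc x y ⊆ Set.Icc 0 1 := fun z hz => ⟨by linarith [hz.1], by linarith [hz.2]⟩
  have h := setIntegral_mono_on (μ := volume) (f := fun _ => δ) (g := v) (s := Set.Ioc x y)
    (by simp) (den_intOn hv hS) measurableSet_Ioc (fun z hz => (hv.2.1 z (hS hz)).1)
  simp [hxy] at h
  linarith

lemma den_Ioc_upper {δ Δ : ℝ} {v : ℝ → ℝ} (hv : IsValueDensity δ Δ v) {x y : ℝ}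
    (hx : 0 ≤ x) (hxy : x ≤ y) (hy : y ≤ 1) : ∫ z in Set.Ioc x y, v z ≤ Δ * (y - x) := by
  have hS : Set.Ioc x y ⊆ Set.Icc 0 1 := fun z hz => ⟨by linarith [hz.1], by linarith [hz.2]⟩
  have h := setIntegral_mono_on (μ := volume) (f := v) (g := fun _ => Δ) (s := Set.Ioc x y)
    (den_intOn hv hS) (by simp) measurableSet_Ioc (fun z hz => (hv.2.1 z (hS hz)).2)
  simp [hxy] at h
  linarith

lemma den_Ioc_add {δ Δ : ℝ} {v : ℝ → ℝ} (hv : IsValueDensity δ Δ v) {x y z : ℝ}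
    (hx : 0 ≤ x) (hxy : x ≤ y) (hyz : y ≤ z) (hz : z ≤ 1) :
    ∫ u in Set.Ioc x z, v u = (∫ u in Set.Ioc x y, v u) + ∫ u in Set.Ioc y z, v u := by
  rw [← Set.Ioc_union_Ioc_eq_Ioc hxy hyz, setIntegral_union (Set.Ioc_disjoint_Ioc_of_le le_rfl)
    measurableSet_Ioc]
  · exact den_intOn hv (fun u hu => ⟨by linarith [hu.1], by linarith [hu.2]⟩)
  · exact den_intOn hv (fun u hu => ⟨by linarith [hu.1], by linarith [hu.2]⟩)

/-- There is an intermediate cut with prescribed remaining value. -/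
lemma den_ivt {δ Δ : ℝ} {v : ℝ → ℝ} (hv : IsValueDensity δ Δ v) {x y r : ℝ}
    (hx : 0 ≤ x) (hxy : x ≤ y) (hy : y ≤ 1) (hr0 : 0 ≤ r) (hr : r ≤ ∫ u in Set.Ioc x y, v u) :
    ∃ q ∈ Set.Icc x y, ∫ u in Set.Ioc q y, v u = r := by
  have hint : IntegrableOn v (Set.uIcc y x) := by
    rw [Set.uIcc_comm, Set.uIcc_of_le hxy]
    exact den_intOn hv (fun u hu => ⟨by linarith [hu.1], by linarith [hu.2]⟩)
  have hcont : ContinuousOn (fun q => - ∫ u in y..q, v u) (Set.Icc x y) := by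
    have := intervalIntegral.continuousOn_primitive_interval (μ := volume) (f := v) (a := y) (b := x) hint
    rw [Set.uIcc_comm, Set.uIcc_of_le hxy] at this
    exact this.neg
  have h2 := intermediate_value_Icc' hxy hcont
  have : r ∈ Set.Icc (- ∫ u in y..y, v u) (- ∫ u in y..x, v u) := by
    refine ⟨by simpa using hr0, ?_⟩
    rw [← intervalIntegral.integral_symm, intervalIntegral.integral_of_le hxy]
    exact hr
  obtain ⟨q, hq, hqr⟩ := h2 this
  refine ⟨q, hq, ?_⟩
  simp only at hqr
  rw [← intervalIntegral.integral_symm, intervalIntegral.integral_of_le hq.2] at hqr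
  exact hqr

/-! ### The base configuration -/

def baseCuts (k : ℕ) (s d : ℝ) : Fin k → ℝ :=
  fun i => if (i : ℕ) = 0 then s else s + (k + i) * d

def lowSet (k : ℕ) (s d : ℝ) : Set ℝ := hPiece (baseCuts k s d) true

def highSet (k : ℕ) (s d : ℝ) : Set ℝ := hPiece (baseCuts k s d) false

def baseDen (k : ℕ) (vA : ℝ → ℝ) (s d ρL ρH : ℝ) : ℝ → ℝ :=
  fun x => if x ∈ lowSet k s d then ρL * vA x else ρH * vA x

def bump (lo w h : ℝ) : ℝ → ℝ := fun x =>
  (Set.Ioc lo (lo + w)).indicator (fun _ => -h) x +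
    (Set.Ioc (lo + w) (lo + 2 * w)).indicator (fun _ => h) x

structure Cfg (δ Δ : ℝ) (k : ℕ) (vA : ℝ → ℝ) (s d η ρL ρH : ℝ) : Prop where
  hδ : 0 < δ
  hδΔ : δ ≤ Δ
  hk : 2 ≤ k
  hv : IsValueDensity δ Δ vA
  hs : 0 < s
  hd : 0 < d
  hsd : s + 2 * k * d = 1
  hη : 0 < η
  hηd : η ≤ d / 4
  hA0 : δ * d ≤ ∫ x in Set.Ioc 0 s, vA x
  hE : ∫ x in Set.Ioc s (s + η), vA x ≤ δ * d / 4
  hL0 : 1 / 3 ≤ ρL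
  hL1 : ρL ≤ 2 / 3
  hH : 2 ≤ ρH
  eq1 : ρL * (∫ x in lowSet k s d, vA x) + ρH * (∫ x in highSet k s d, vA x) = 1
  eq2 : ρL * (∫ x in lowSet k s d, vA x) + ρH * (∫ x in Set.Ioc s (s + η), vA x) = 1 / 2

lemma measurable_bump (lo w h : ℝ) : Measurable (bump lo w h) :=
  (measurable_const.indicator measurableSet_Ioc).add
    (measurable_const.indicator measurableSet_Ioc)

lemma abs_bump_le (lo w h : ℝ) (hh : 0 ≤ h) (x : ℝ) : |bump lo w h x| ≤ h := by
  unfold bump Set.indicator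
  by_cases h1 : x ∈ Set.Ioc lo (lo + w) <;> by_cases h2 : x ∈ Set.Ioc (lo + w) (lo + 2 * w)
  · exact absurd h1.2 (not_le.mpr h2.1)
  · simp [h1, h2, abs_of_nonneg hh]
  · simp [h1, h2, abs_of_nonneg hh]
  · simp [h1, h2, hh]

lemma bump_eq_zero {lo w h x : ℝ} (hw : 0 ≤ w) (hx : x ∉ Set.Ioc lo (lo + 2 * w)) :
    bump lo w h x = 0 := by
  unfold bump
  rw [Set.indicator_of_notMem, Set.indicator_of_notMem, add_zero]
  · intro h; exact hx ⟨by linarith [h.1], h.2⟩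
  · intro h; exact hx ⟨h.1, by linarith [h.2]⟩

lemma integral_bump (lo w h : ℝ) {Z : Set ℝ} (_hZ : MeasurableSet Z) (hZI : Z ⊆ Set.Icc (0:ℝ) 1) :
    ∫ x in Z, bump lo w h x = h * (volume.real (Z ∩ Set.Ioc (lo + w) (lo + 2 * w))
      - volume.real (Z ∩ Set.Ioc lo (lo + w))) := by
  have hfin : volume Z ≠ ⊤ :=
    ne_top_of_le_ne_top (by simp) (measure_mono hZI)
  have hc : ∀ c : ℝ, IntegrableOn (fun _ : ℝ => c) Z := fun c => integrableOn_const hfin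
  unfold bump
  rw [integral_add ((hc _).indicator measurableSet_Ioc) ((hc _).indicator measurableSet_Ioc),
    setIntegral_indicator measurableSet_Ioc, setIntegral_indicator measurableSet_Ioc,
    setIntegral_const, setIntegral_const]
  simp only [smul_eq_mul]
  ring

lemma bump_intOn (lo w h : ℝ) (hh : 0 ≤ h) {Z : Set ℝ} (hZI : Z ⊆ Set.Icc (0:ℝ) 1) :
    IntegrableOn (bump lo w h) Z :=
  intOn_of_bdd (measurable_bump lo w h) (fun x _ => abs_bump_le lo w h hh x) hZI

/-- If a cut vector has no cut in the bump interval, the bump is invisible. -/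
lemma integral_bump_of_no_cut {k : ℕ} (c : Fin k → ℝ) (b : Bool) {lo w h : ℝ} (hw : 0 ≤ w)
    (h0 : 0 ≤ lo) (h1 : lo + 2 * w ≤ 1) (hc : ∀ j, c j ∉ Set.Ico lo (lo + 2 * w)) :
    ∫ x in hPiece c b, bump lo w h x = 0 := by
  rw [integral_bump lo w h (measurableSet_hPiece c b) (hPiece_subset c b)]
  have hidx : ∀ x ∈ Set.Ioc lo (lo + 2 * w), cutIdx c x = cutIdx c (lo + 2 * w) := by
    intro x hx
    unfold cutIdx
    congr 1
    ext j
    simp only [Finset.mem_filter, Finset.mem_univ, true_and]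
    constructor
    · intro h; linarith [hx.2]
    · intro h
      by_contra h'
      exact hc j ⟨by linarith [hx.1], h⟩
  have key : ∀ S ⊆ Set.Ioc lo (lo + 2 * w), hPiece c b ∩ S =
      if decide (cutIdx c (lo + 2 * w) % 2 = 0) = b then S else ∅ := by
    intro S hS
    split_ifs with hb
    · ext x
      constructor
      · exact fun h => h.2
      · intro hx
        refine ⟨⟨⟨by linarith [(hS hx).1], by linarith [(hS hx).2]⟩, ?_⟩, hx⟩
        rw [hidx x (hS hx)]; exact hb
    · ext x
      constructor
      · rintro ⟨hx1, hx2⟩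
        exfalso
        apply hb
        rw [← hidx x (hS hx2)]; exact hx1.2
      · exact fun h => absurd h (by simp)
  rw [key _ (fun x hx => ⟨by linarith [hx.1], hx.2⟩),
    key _ (fun x hx => ⟨hx.1, by linarith [hx.2]⟩)]
  split_ifs
  · rw [Real.volume_real_Ioc_of_le (by linarith), Real.volume_real_Ioc_of_le (by linarith)]
    ring
  · simp

/-- If the piece is an initial segment of the bump region, the bump only lowers its value. -/
lemma integral_bump_nonpos {Z : Set ℝ} (hZ : MeasurableSet Z) (hZI : Z ⊆ Set.Icc (0:ℝ) 1)
    {lo w h : ℝ} (hw : 0 ≤ w) (hh : 0 ≤ h)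
    (hlow : ∀ x ∈ Set.Ioc lo (lo + 2 * w), ∀ y ∈ Set.Ioc lo (lo + 2 * w), x ≤ y → y ∈ Z → x ∈ Z) :
    ∫ x in Z, bump lo w h x ≤ 0 := by
  rw [integral_bump lo w h hZ hZI]
  apply mul_nonpos_of_nonneg_of_nonpos hh
  rw [sub_nonpos]
  rcases (Z ∩ Set.Ioc (lo + w) (lo + 2 * w)).eq_empty_or_nonempty with he | ⟨y, hyZ, hy⟩
  · rw [he]; simp
  · have h1 : Z ∩ Set.Ioc lo (lo + w) = Set.Ioc lo (lo + w) := by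
      apply Set.inter_eq_right.2
      intro x hx
      exact hlow x ⟨hx.1, by linarith [hx.2]⟩ y ⟨by linarith [hy.1], hy.2⟩
        (by linarith [hx.2, hy.1]) hyZ
    rw [h1, Real.volume_real_Ioc_of_le (by linarith)]
    calc volume.real (Z ∩ Set.Ioc (lo + w) (lo + 2 * w))
        ≤ volume.real (Set.Ioc (lo + w) (lo + 2 * w)) :=
          measureReal_mono Set.inter_subset_right (by simp)
      _ = lo + w - lo := by
          rw [Real.volume_real_Ioc_of_le (by linarith)]; ring

/-! ### Consequences of the configuration -/

section cfg

variable {δ Δ : ℝ} {k : ℕ} {vA : ℝ → ℝ} {s d η ρL ρH : ℝ}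

lemma Cfg.kpos (C : Cfg δ Δ k vA s d η ρL ρH) : (2:ℝ) ≤ k := by exact_mod_cast C.hk

lemma Cfg.kd (C : Cfg δ Δ k vA s d η ρL ρH) : 2 * d ≤ k * d :=
  mul_le_mul_of_nonneg_right C.kpos C.hd.le

lemma Cfg.t_le (C : Cfg δ Δ k vA s d η ρL ρH) : s + (k + 1) * d ≤ 1 := by
  have := C.hsd; have := C.kd; have := C.hd
  nlinarith

lemma Cfg.sη_le (C : Cfg δ Δ k vA s d η ρL ρH) : s + η ≤ s + k * d := by
  have := C.hηd; have := C.kd; have := C.hd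
  nlinarith

lemma Cfg.baseCuts_mono (C : Cfg δ Δ k vA s d η ρL ρH) : Monotone (baseCuts k s d) := by
  intro i j hij
  have hij' : (i : ℕ) ≤ j := hij
  have hijr : (i : ℝ) ≤ j := by exact_mod_cast hij'
  have hj0 : (0 : ℝ) ≤ j := by positivity
  have := C.hd; have := C.kd
  unfold baseCuts
  split_ifs with h1 h2
  · exact le_rfl
  · nlinarith
  · omega
  · nlinarith

lemma Cfg.baseCuts_mem (C : Cfg δ Δ k vA s d η ρL ρH) (i : Fin k) :
    baseCuts k s d i ∈ Set.Icc (0:ℝ) 1 := by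
  have hi : ((i : ℕ) : ℝ) ≤ k := by exact_mod_cast i.2.le
  have hi0 : (0 : ℝ) ≤ ((i : ℕ) : ℝ) := by positivity
  have := C.hd; have := C.kd; have := C.hs; have := C.hsd
  unfold baseCuts
  split_ifs
  · constructor <;> nlinarith
  · constructor <;> nlinarith

lemma base_idx_zero (hd : 0 < d) {x : ℝ} (hx : x ≤ s) :
    cutIdx (baseCuts k s d) x = 0 := by
  apply cutIdx_eq_of (Nat.zero_le _)
  intro i
  simp only [not_lt_zero, iff_false, not_lt]
  refine hx.trans ?_
  unfold baseCuts
  split_ifs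
  · exact le_rfl
  · have : (0:ℝ) ≤ (k + ((i : ℕ) : ℝ)) * d := by positivity
    linarith

lemma base_idx_one (hk : 2 ≤ k) (hd : 0 < d) {x : ℝ} (hx : x ∈ Set.Ioc s (s + (k + 1) * d)) :
    cutIdx (baseCuts k s d) x = 1 := by
  apply cutIdx_eq_of (by omega)
  intro i
  unfold baseCuts
  split_ifs with h
  · simp [h, hx.1]
  · have h1 : (1 : ℝ) ≤ ((i : ℕ) : ℝ) := by exact_mod_cast Nat.one_le_iff_ne_zero.2 h
    constructor
    · intro h2
      have := hx.2
      nlinarith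
    · intro h2; omega

lemma Cfg.idx_zero (C : Cfg δ Δ k vA s d η ρL ρH) {x : ℝ} (hx : x ≤ s) :
    cutIdx (baseCuts k s d) x = 0 := base_idx_zero C.hd hx

lemma Cfg.idx_one (C : Cfg δ Δ k vA s d η ρL ρH) {x : ℝ} (hx : x ∈ Set.Ioc s (s + (k + 1) * d)) :
    cutIdx (baseCuts k s d) x = 1 := base_idx_one C.hk C.hd hx

lemma Cfg.idx_J (C : Cfg δ Δ k vA s d η ρL ρH) {j : ℕ} (hj : 1 ≤ j) (hjk : j ≤ k) {x : ℝ}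
    (hx : x ∈ Set.Ioc (s + (k + j - 1) * d) (s + (k + j) * d)) :
    cutIdx (baseCuts k s d) x = j := by
  apply cutIdx_eq_of hjk
  intro i
  have := C.hd; have := C.kd
  have hj' : (1 : ℝ) ≤ j := by exact_mod_cast hj
  unfold baseCuts
  split_ifs with h
  · rw [h]
    have := hx.1
    constructor
    · intro _; omega
    · intro _; nlinarith
  · constructor
    · intro h2
      by_contra h3
      have : (j : ℝ) ≤ ((i : ℕ) : ℝ) := by exact_mod_cast not_lt.mp h3
      have := hx.2
      nlinarith
    · intro h2
      have : ((i : ℕ) : ℝ) + 1 ≤ j := by exact_mod_cast h2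
      have := hx.1
      nlinarith

lemma highSet_eq : highSet k s d = Set.Icc (0:ℝ) 1 \ lowSet k s d :=
  hPiece_not _ true

lemma int_split {v : ℝ → ℝ} {Z : Set ℝ} (hZ : MeasurableSet Z) (hZI : Z ⊆ Set.Icc (0:ℝ) 1)
    (hi : IntegrableOn v Z) :
    ∫ x in Z, v x = (∫ x in Z ∩ lowSet k s d, v x) + ∫ x in Z ∩ highSet k s d, v x := by
  rw [← setIntegral_union]
  · congr 2
    rw [highSet_eq, ← Set.inter_union_distrib_left, Set.union_sdiff_self]
    ext x
    constructor
    · exact fun h => ⟨h, Or.inr (hZI h)⟩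
    · exact fun h => h.1
  · rw [highSet_eq]
    exact Set.disjoint_left.2 (fun x h1 h2 => h2.2.2 h1.2)
  · exact hZ.inter (measurableSet_hPiece _ _)
  · exact hi.mono_set Set.inter_subset_left
  · exact hi.mono_set Set.inter_subset_left

lemma Cfg.measurable_base (C : Cfg δ Δ k vA s d η ρL ρH) :
    Measurable (baseDen k vA s d ρL ρH) :=
  Measurable.ite (measurableSet_hPiece _ _) (C.hv.1.const_mul _) (C.hv.1.const_mul _)

lemma Cfg.base_bounds (C : Cfg δ Δ k vA s d η ρL ρH) {x : ℝ} (hx : x ∈ Set.Icc (0:ℝ) 1) :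
    δ / 3 ≤ baseDen k vA s d ρL ρH x ∧ baseDen k vA s d ρL ρH x ≤ ρH * Δ := by
  obtain ⟨h1, h2⟩ := C.hv.2.1 x hx
  have := C.hδ; have := C.hL0; have := C.hL1; have := C.hH
  unfold baseDen
  split_ifs
  · constructor <;> nlinarith
  · constructor <;> nlinarith

lemma Cfg.base_intOn (C : Cfg δ Δ k vA s d η ρL ρH) {Z : Set ℝ} (hZI : Z ⊆ Set.Icc (0:ℝ) 1) :
    IntegrableOn (baseDen k vA s d ρL ρH) Z := by
  apply intOn_of_bdd C.measurable_base (C := ρH * Δ) _ hZI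
  intro x hx
  have := C.base_bounds hx
  rw [abs_of_nonneg (by linarith [C.hδ])]
  exact this.2

lemma Cfg.base_int (C : Cfg δ Δ k vA s d η ρL ρH) {Z : Set ℝ} (hZ : MeasurableSet Z)
    (hZI : Z ⊆ Set.Icc (0:ℝ) 1) :
    ∫ x in Z, baseDen k vA s d ρL ρH x =
      ρL * (∫ x in Z ∩ lowSet k s d, vA x) + ρH * ∫ x in Z ∩ highSet k s d, vA x := by
  rw [int_split (k := k) (s := s) (d := d) hZ hZI (C.base_intOn hZI)]
  congr 1
  · rw [← integral_const_mul]
    apply setIntegral_congr_fun (hZ.inter (measurableSet_hPiece _ _))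
    intro x hx
    have h2 : x ∈ lowSet k s d := hx.2
    simp [baseDen, h2]
  · rw [← integral_const_mul]
    apply setIntegral_congr_fun (hZ.inter (measurableSet_hPiece _ _))
    intro x hx
    have h2 : x ∈ highSet k s d := hx.2
    rw [highSet_eq] at h2
    simp [baseDen, h2.2]

lemma Cfg.base_total (C : Cfg δ Δ k vA s d η ρL ρH) :
    ∫ x in Set.Icc (0:ℝ) 1, baseDen k vA s d ρL ρH x = 1 := by
  have e1 : Set.Icc (0:ℝ) 1 ∩ lowSet k s d = lowSet k s d :=
    Set.inter_eq_right.2 (hPiece_subset _ _)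
  have e2 : Set.Icc (0:ℝ) 1 ∩ highSet k s d = highSet k s d :=
    Set.inter_eq_right.2 (hPiece_subset _ _)
  rw [C.base_int measurableSet_Icc le_rfl, e1, e2]
  exact C.eq1

lemma Cfg.base_isDensity (C : Cfg δ Δ k vA s d η ρL ρH) {D : ℝ} (hD : 2 * ρH * Δ ≤ D) :
    IsValueDensity (δ / 3) D (baseDen k vA s d ρL ρH) := by
  refine ⟨C.measurable_base, fun x hx => ⟨(C.base_bounds hx).1, ?_⟩, C.base_total⟩
  have := (C.base_bounds hx).2
  have h3 : 0 ≤ ρH * Δ := mul_nonneg (by linarith [C.hH]) (by linarith [C.hδ, C.hδΔ])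
  linarith

/-- The optimal value of Alice under the base density. -/
def optU (k : ℕ) (vA : ℝ → ℝ) (s d η : ℝ) : ℝ :=
  (∫ x in lowSet k s d, vA x) + ∫ x in Set.Ioc s (s + η), vA x

lemma Cfg.low_diff (C : Cfg δ Δ k vA s d η ρL ρH) {Z : Set ℝ} (hZ : MeasurableSet Z) :
    ∫ x in lowSet k s d \ Z, vA x =
      (∫ x in lowSet k s d, vA x) - ∫ x in Z ∩ lowSet k s d, vA x := by
  have hi : IntegrableOn vA (lowSet k s d) := den_intOn C.hv (hPiece_subset _ _)
  have h := integral_inter_add_sdiff (μ := volume) (f := vA) hZ hi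
  rw [Set.inter_comm] at h
  linarith

lemma Cfg.low_diff_nonneg (C : Cfg δ Δ k vA s d η ρL ρH) {Z : Set ℝ} (hZ : MeasurableSet Z) :
    0 ≤ ∫ x in lowSet k s d \ Z, vA x :=
  den_nonneg C.hδ C.hv (fun _ hx => hPiece_subset _ _ hx.1)
    ((measurableSet_hPiece _ _).diff hZ)

lemma Cfg.near_opt (C : Cfg δ Δ k vA s d η ρL ρH) {Z : Set ℝ} (hZ : MeasurableSet Z)
    (hZI : Z ⊆ Set.Icc (0:ℝ) 1) (hB : ∫ x in Z, baseDen k vA s d ρL ρH x ≤ 1 / 2) :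
    (∫ x in Z ∩ highSet k s d, vA x) ≤ (∫ x in Set.Ioc s (s + η), vA x) +
        (∫ x in lowSet k s d \ Z, vA x) / 3 ∧
      ∫ x in Z, vA x ≤ optU k vA s d η - 2 / 3 * ∫ x in lowSet k s d \ Z, vA x := by
  rw [C.base_int hZ hZI] at hB
  have h0 := C.low_diff_nonneg hZ
  have h1 := C.low_diff hZ
  have h2 := int_split (k := k) (s := s) (d := d) hZ hZI (den_intOn C.hv hZI)
  have h3 := C.eq2
  have := C.hH; have := C.hL1
  unfold optU
  set y := ∫ x in lowSet k s d \ Z, vA x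
  set e := ∫ x in Z ∩ highSet k s d, vA x
  set a := ∫ x in Z ∩ lowSet k s d, vA x
  set l := ∫ x in lowSet k s d, vA x
  set E := ∫ x in Set.Ioc s (s + η), vA x
  have h4 : ρH * (e - E) ≤ ρL * y := by rw [h1]; nlinarith
  have h5 : ρL * y ≤ 2 / 3 * y := by nlinarith
  have h6 : e - E ≤ y / 3 := by
    by_contra h7
    push Not at h7
    nlinarith
  constructor
  · linarith
  · linarith

lemma Cfg.upper (C : Cfg δ Δ k vA s d η ρL ρH) {Z : Set ℝ} (hZ : MeasurableSet Z)
    (hZI : Z ⊆ Set.Icc (0:ℝ) 1) (hB : ∫ x in Z, baseDen k vA s d ρL ρH x ≤ 1 / 2) :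
    ∫ x in Z, vA x ≤ optU k vA s d η := by
  have h1 := (C.near_opt hZ hZI hB).2
  have h2 := C.low_diff_nonneg hZ
  linarith

/-- The test interval of index `j`. -/
def testJ (k : ℕ) (s d : ℝ) (j : ℕ) : Set ℝ :=
  if j = 0 then Set.Ioc 0 s else Set.Ioc (s + (k + j - 1) * d) (s + (k + j) * d)

lemma Cfg.testJ_props (C : Cfg δ Δ k vA s d η ρL ρH) {j : ℕ} (hj : j ≤ k) :
    testJ k s d j ⊆ Set.Icc (0:ℝ) 1 ∧ MeasurableSet (testJ k s d j) ∧
      δ * d ≤ (∫ x in testJ k s d j, vA x) ∧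
      ∀ x ∈ testJ k s d j, cutIdx (baseCuts k s d) x = j := by
  have h1 := C.hsd; have h2 := C.hd; have h3 := C.kd; have h4 := C.hs
  unfold testJ
  split_ifs with h
  · refine ⟨fun x hx => ⟨hx.1.le, by nlinarith [hx.2]⟩, measurableSet_Ioc, C.hA0, ?_⟩
    intro x hx
    rw [h]; exact C.idx_zero hx.2
  · have hj1 : 1 ≤ j := by omega
    have hj' : (1 : ℝ) ≤ j := by exact_mod_cast hj1
    have hjk : (j : ℝ) ≤ k := by exact_mod_cast hj
    have ha : 0 ≤ s + (k + j - 1) * d := by nlinarith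
    have hb : s + (k + j) * d ≤ 1 := by nlinarith
    refine ⟨fun x hx => ⟨by linarith [hx.1], by linarith [hx.2]⟩, measurableSet_Ioc, ?_,
      fun x hx => C.idx_J hj1 hj hx⟩
    have := den_Ioc_lower C.hv ha (by nlinarith) hb
    calc δ * d = δ * (s + (k + j) * d - (s + (k + j - 1) * d)) := by ring
      _ ≤ _ := this

/-- Structure of near-optimal partitions: initial segments of the bump region. -/
lemma Cfg.structure_lemma (C : Cfg δ Δ k vA s d η ρL ρH) (c : Fin k → ℝ) (b : Bool)
    (hB : ∫ x in hPiece c b, baseDen k vA s d ρL ρH x ≤ 1 / 2)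
    (hA : optU k vA s d η - δ * d / 8 < ∫ x in hPiece c b, vA x)
    {x y : ℝ} (hx : x ∈ Set.Ioc s (s + η)) (hy : y ∈ Set.Ioc s (s + η)) (hxy : x ≤ y)
    (hyZ : y ∈ hPiece c b) : x ∈ hPiece c b := by
  have hZ := measurableSet_hPiece c b
  have hZI := hPiece_subset c b
  obtain ⟨h1, h2⟩ := C.near_opt hZ hZI hB
  have h0 := C.low_diff_nonneg hZ
  have hE := C.hE
  have hδd : 0 < δ * d := mul_pos C.hδ C.hd
  -- test points
  have hex : ∀ j, j ≤ k → ∃ z ∈ testJ k s d j, (z ∈ hPiece c b ↔ j % 2 = 0) := by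
    intro j hj
    obtain ⟨hJ1, hJ2, hJ3, hJ4⟩ := C.testJ_props hj
    by_contra hcon
    push Not at hcon
    by_cases hpar : j % 2 = 0
    · have hsub : testJ k s d j ⊆ lowSet k s d \ hPiece c b := by
        intro z hz
        refine ⟨⟨hJ1 hz, ?_⟩, ?_⟩
        · rw [hJ4 z hz]; simpa using hpar
        · intro hzZ
          rcases hcon z hz with h | h
          · exact h.2 hpar
          · exact h.1 hzZ
      have := den_mono C.hδ C.hv (S' := lowSet k s d \ hPiece c b)
        (fun _ hx => hPiece_subset _ _ hx.1) ((measurableSet_hPiece _ _).diff hZ) hsub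
      linarith
    · have hsub : testJ k s d j ⊆ hPiece c b ∩ highSet k s d := by
        intro z hz
        refine ⟨?_, hJ1 hz, ?_⟩
        · by_contra hzZ
          rcases hcon z hz with h | h
          · exact hzZ h.1
          · exact hpar h.2
        · rw [hJ4 z hz]; simpa using hpar
      have := den_mono C.hδ C.hv (S' := hPiece c b ∩ highSet k s d)
        (fun _ hx => hZI hx.1) (hZ.inter (measurableSet_hPiece _ _)) hsub
      linarith
  choose! z hz hzp using hex
  by_contra hxZ
  have hI : ∀ u v : ℝ, u ∈ Set.Icc (0:ℝ) 1 → v ∈ Set.Icc (0:ℝ) 1 → u ≤ v →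
      (u ∈ hPiece c b ↔ v ∉ hPiece c b) → cutIdx c u + 1 ≤ cutIdx c v := by
    intro u v hu hv huv hne
    rcases Nat.lt_or_ge (cutIdx c u) (cutIdx c v) with h | h
    · exact h
    · have heq : cutIdx c u = cutIdx c v := le_antisymm (cutIdx_mono c huv) h
      exfalso
      have : u ∈ hPiece c b ↔ v ∈ hPiece c b := by
        simp only [hPiece, Set.mem_ofPred_eq, heq, hu, hv]
      tauto
  have hzI : ∀ j, j ≤ k → z j ∈ Set.Icc (0:ℝ) 1 := fun j hj => (C.testJ_props hj).1 (hz j hj)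
  have hk := C.hk
  have hsη := C.sη_le
  have ht := C.t_le
  have hs := C.hs
  have hd := C.hd
  have hxI : x ∈ Set.Icc (0:ℝ) 1 := ⟨by linarith [hx.1], by nlinarith [hx.2]⟩
  have hyI : y ∈ Set.Icc (0:ℝ) 1 := ⟨by linarith [hy.1], by nlinarith [hy.2]⟩
  have hz0 := hz 0 (by omega)
  simp only [testJ, if_true] at hz0
  have hz1 := hz 1 (by omega)
  simp only [testJ, one_ne_zero, if_false, Nat.cast_one] at hz1
  have e0 : cutIdx c (z 0) + 1 ≤ cutIdx c x := by
    apply hI _ _ (hzI 0 (by omega)) hxI (by linarith [hz0.2, hx.1])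
    have := hzp 0 (by omega)
    tauto
  have e1 : cutIdx c x + 1 ≤ cutIdx c y := by
    apply hI _ _ hxI hyI hxy
    tauto
  have e2 : cutIdx c y + 1 ≤ cutIdx c (z 1) := by
    apply hI _ _ hyI (hzI 1 (by omega)) (by nlinarith [hz1.1, hy.2])
    have := (hzp 1 (by omega)).1
    constructor
    · intro _ h; have := this h; omega
    · intro _; exact hyZ
  have hind : ∀ j, 1 ≤ j → j ≤ k → j + 2 ≤ cutIdx c (z j) := by
    intro j hj
    induction j, hj using Nat.le_induction with
    | base => intro _; omega
    | succ n hn ih =>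
      intro hnk
      have h5 := ih (by omega)
      have h6 : cutIdx c (z n) + 1 ≤ cutIdx c (z (n+1)) := by
        apply hI _ _ (hzI n (by omega)) (hzI _ hnk)
        · have a1 := hz n (by omega)
          have a2 := hz (n+1) hnk
          simp only [testJ, show n ≠ 0 by omega, show n + 1 ≠ 0 by omega, if_false] at a1 a2
          have := a1.2
          have := a2.1
          push_cast at *
          nlinarith
        · have a1 := hzp n (by omega)
          have a2 := hzp (n+1) hnk
          rw [a1, a2]
          omega
      omega
  have := hind k (by omega) le_rfl
  have := cutIdx_le c (z k)
  omega

/-! ### Explicit good partitions -/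

def modCuts (k : ℕ) (s d p q : ℝ) : Fin k → ℝ :=
  fun i => if (i : ℕ) = 0 then p else if (i : ℕ) = 1 then q else baseCuts k s d i

lemma Cfg.modCuts_valid (C : Cfg δ Δ k vA s d η ρL ρH) {p q : ℝ} (hp : s ≤ p) (hpq : p ≤ q)
    (hq : q ≤ s + (k + 1) * d) : ValidCuts k (modCuts k s d p q) := by
  have hd := C.hd; have hs := C.hs; have ht := C.t_le
  have hge : ∀ j : Fin k, 2 ≤ (j : ℕ) → s + (k + 1) * d ≤ baseCuts k s d j := by
    intro j hj
    have : (2 : ℝ) ≤ ((j : ℕ) : ℝ) := by exact_mod_cast hj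
    unfold baseCuts
    rw [if_neg (by omega)]
    nlinarith
  constructor
  · intro i j hij
    have hij' : (i : ℕ) ≤ j := hij
    unfold modCuts
    split_ifs with h1 h2 h3 h4 h5 h6
    · exact le_rfl
    · exact hpq
    · have := hge j (by omega); linarith
    · omega
    · exact le_rfl
    · have := hge j (by omega); linarith
    · omega
    · omega
    · exact C.baseCuts_mono hij
  · intro i
    unfold modCuts
    split_ifs
    · constructor <;> linarith
    · constructor <;> linarith
    · exact C.baseCuts_mem i

lemma Cfg.mod_piece (C : Cfg δ Δ k vA s d η ρL ρH) {p q : ℝ} (hp : s ≤ p) (hpq : p ≤ q)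
    (hq : q ≤ s + (k + 1) * d) : hPiece (modCuts k s d p q) true =
      lowSet k s d ∪ (Set.Ioc s p ∪ Set.Ioc q (s + (k + 1) * d)) := by
  have hd := C.hd; have hs := C.hs; have ht := C.t_le; have hk := C.hk
  have hge : ∀ j : Fin k, 2 ≤ (j : ℕ) → s + (k + 1) * d ≤ baseCuts k s d j := by
    intro j hj
    have : (2 : ℝ) ≤ ((j : ℕ) : ℝ) := by exact_mod_cast hj
    unfold baseCuts
    rw [if_neg (by omega)]
    nlinarith
  have hmod : ∀ x n, n ≤ 2 → ((p < x) ↔ 0 < n) → ((q < x) ↔ 1 < n) → x ≤ s + (k + 1) * d →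
      cutIdx (modCuts k s d p q) x = n := by
    intro x n hn h1 h2 h3
    apply cutIdx_eq_of (by omega)
    intro i
    unfold modCuts
    split_ifs with h4 h5
    · rw [h4]; exact h1
    · rw [h5]; exact h2
    · have := hge i (by omega)
      constructor
      · intro h; linarith
      · intro h; omega
  ext x
  by_cases hxI : x ∈ Set.Icc (0:ℝ) 1
  swap
  · constructor
    · exact fun h => absurd h.1 hxI
    · rintro (h | h | h)
      · exact absurd h.1 hxI
      · exact absurd ⟨by linarith [h.1], by linarith [h.2]⟩ hxI
      · exact absurd ⟨by linarith [h.1], by linarith [h.2]⟩ hxI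
  have hZ : x ∈ hPiece (modCuts k s d p q) true ↔ cutIdx (modCuts k s d p q) x % 2 = 0 := by
    simp only [hPiece, Set.mem_ofPred_eq, hxI, true_and, decide_eq_true_eq]
  have hL : x ∈ lowSet k s d ↔ cutIdx (baseCuts k s d) x % 2 = 0 := by
    simp only [lowSet, hPiece, Set.mem_ofPred_eq, hxI, true_and, decide_eq_true_eq]
  rw [Set.mem_union, Set.mem_union, hZ, hL]
  rcases le_or_gt x s with h1 | h1
  · rw [C.idx_zero h1, hmod x 0 (by omega) (by simp; linarith) (by simp; linarith) (by linarith)]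
    simp
  rcases le_or_gt x (s + (k + 1) * d) with h2 | h2
  · rw [C.idx_one ⟨h1, h2⟩]
    simp only [Set.mem_Ioc, h1, h2, true_and, and_true]
    rcases le_or_gt x p with h3 | h3
    · rw [hmod x 0 (by omega) (by simp; linarith) (by simp; linarith) h2]
      simp [h3]
    rcases le_or_gt x q with h4 | h4
    · rw [hmod x 1 (by omega) (by simp; linarith) (by simp; linarith) h2]
      simp [h3, h4]
    · rw [hmod x 2 (by omega) (by simp; linarith) (by simp; linarith) h2]
      simp [h4]
  · have : cutIdx (modCuts k s d p q) x = cutIdx (baseCuts k s d) x := by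
      unfold cutIdx
      congr 1
      ext i
      simp only [Finset.mem_filter, Finset.mem_univ, true_and]
      unfold modCuts
      split_ifs with h4 h5
      · simp only [baseCuts, h4, if_true]
        constructor <;> intro <;> linarith
      · simp only [baseCuts, h5, one_ne_zero, if_false, Nat.cast_one]
        constructor <;> intro <;> linarith
      · exact Iff.rfl
    rw [this]
    constructor
    · exact fun h => Or.inl h
    · rintro (h | h | h)
      · exact h
      · linarith [h.2]
      · linarith [h.2]

lemma Cfg.Ioc_sub_high (C : Cfg δ Δ k vA s d η ρL ρH) :
    Set.Ioc s (s + (k + 1) * d) ⊆ highSet k s d := by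
  intro x hx
  have hs := C.hs; have ht := C.t_le
  refine ⟨⟨by linarith [hx.1], by linarith [hx.2]⟩, ?_⟩
  rw [C.idx_one hx]; rfl

lemma Cfg.mod_vals (C : Cfg δ Δ k vA s d η ρL ρH) {p q : ℝ} (hp : s ≤ p) (hpq : p ≤ q)
    (hq : q ≤ s + (k + 1) * d) :
    (∫ x in hPiece (modCuts k s d p q) true, vA x = (∫ x in lowSet k s d, vA x) +
      ((∫ x in Set.Ioc s p, vA x) + ∫ x in Set.Ioc q (s + (k + 1) * d), vA x)) ∧
    (∫ x in hPiece (modCuts k s d p q) true, baseDen k vA s d ρL ρH x =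
      ρL * (∫ x in lowSet k s d, vA x) +
      ρH * ((∫ x in Set.Ioc s p, vA x) + ∫ x in Set.Ioc q (s + (k + 1) * d), vA x)) := by
  have hZ := measurableSet_hPiece (modCuts k s d p q) true
  have hZI := hPiece_subset (modCuts k s d p q) true
  have hsub : Set.Ioc s p ∪ Set.Ioc q (s + (k + 1) * d) ⊆ highSet k s d := by
    refine subset_trans ?_ C.Ioc_sub_high
    rintro x (h | h)
    · exact ⟨h.1, by linarith [h.2]⟩
    · exact ⟨by linarith [h.1], h.2⟩
  have e1 : hPiece (modCuts k s d p q) true ∩ lowSet k s d = lowSet k s d := by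
    rw [C.mod_piece hp hpq hq]
    exact Set.inter_eq_right.2 Set.subset_union_left
  have e2 : hPiece (modCuts k s d p q) true ∩ highSet k s d =
      Set.Ioc s p ∪ Set.Ioc q (s + (k + 1) * d) := by
    rw [C.mod_piece hp hpq hq]
    ext x
    constructor
    · rintro ⟨h1 | h1, h2⟩
      · rw [highSet_eq] at h2
        exact absurd h1 h2.2
      · exact h1
    · exact fun h => ⟨Or.inr h, hsub h⟩
  have e3 : ∫ x in Set.Ioc s p ∪ Set.Ioc q (s + (k + 1) * d), vA x =
      (∫ x in Set.Ioc s p, vA x) + ∫ x in Set.Ioc q (s + (k + 1) * d), vA x := by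
    apply setIntegral_union (Set.Ioc_disjoint_Ioc_of_le hpq) measurableSet_Ioc
    · exact den_intOn C.hv (fun x hx => hPiece_subset _ _ (hsub (Or.inl hx)))
    · exact den_intOn C.hv (fun x hx => hPiece_subset _ _ (hsub (Or.inr hx)))
  constructor
  · rw [int_split (k := k) (s := s) (d := d) hZ hZI (den_intOn C.hv hZI), e1, e2, e3]
  · rw [C.base_int hZ hZI, e1, e2, e3]

lemma piece_compl {v : ℝ → ℝ} (hi : IntegrableOn v (Set.Icc (0:ℝ) 1))
    (hv1 : ∫ x in Set.Icc (0:ℝ) 1, v x = 1) (c : Fin k → ℝ) (b : Bool) :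
    ∫ x in hPiece c (!b), v x = 1 - ∫ x in hPiece c b, v x := by
  rw [hPiece_not, setIntegral_sdiff (measurableSet_hPiece c b) hi (hPiece_subset c b), hv1]

lemma stack_lower (hδ : 0 < δ) (hA : IsValueDensity δ Δ vA) {v : ℝ → ℝ}
    (hi : IntegrableOn v (Set.Icc (0:ℝ) 1))
    (hv1 : ∫ x in Set.Icc (0:ℝ) 1, v x = 1) {c : Fin k → ℝ} (hc : ValidCuts k c)
    (hB : ∫ x in hPiece c true, v x ≤ 1 / 2) :
    ∫ x in hPiece c true, vA x ≤ stackelbergValue k vA v := by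
  unfold stackelbergValue
  apply le_csSup
  · refine ⟨1, ?_⟩
    rintro u ⟨c', b, hc', -, rfl⟩
    rw [pieceVal_alt hc', ← hA.2.2]
    exact den_mono hδ hA le_rfl measurableSet_Icc (hPiece_subset _ _)
  · refine ⟨c, true, hc, ?_, (pieceVal_alt hc _ _).symm⟩
    rw [pieceVal_alt hc, piece_compl hi hv1]
    linarith

lemma Cfg.base_stack (C : Cfg δ Δ k vA s d η ρL ρH) :
    optU k vA s d η ≤ stackelbergValue k vA (baseDen k vA s d ρL ρH) := by
  have h1 := C.sη_le
  have hp : s ≤ s + η := by linarith [C.hη]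
  have hpq : s + η ≤ s + (k + 1) * d := by nlinarith [C.hd]
  obtain ⟨e1, e2⟩ := C.mod_vals hp hpq le_rfl
  have e3 := stack_lower C.hδ C.hv (C.base_intOn le_rfl) C.base_total
    (C.modCuts_valid hp hpq le_rfl) (by
      rw [e2, ← C.eq2]; simp)
  rw [e1] at e3
  simpa [optU] using e3

/-- The perturbed density. -/
def bumpDen (k : ℕ) (vA : ℝ → ℝ) (s d ρL ρH δ lo w : ℝ) : ℝ → ℝ :=
  fun x => baseDen k vA s d ρL ρH x + bump lo w (ρH * δ / 2) x

lemma Cfg.h_nonneg (C : Cfg δ Δ k vA s d η ρL ρH) : 0 ≤ ρH * δ / 2 := by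
  have := C.hH; have := C.hδ
  positivity

lemma Cfg.bump_int (C : Cfg δ Δ k vA s d η ρL ρH) (lo w : ℝ) {Z : Set ℝ}
    (hZI : Z ⊆ Set.Icc (0:ℝ) 1) :
    ∫ x in Z, bumpDen k vA s d ρL ρH δ lo w x =
      (∫ x in Z, baseDen k vA s d ρL ρH x) + ∫ x in Z, bump lo w (ρH * δ / 2) x :=
  integral_add (C.base_intOn hZI) (bump_intOn _ _ _ C.h_nonneg hZI)

lemma Cfg.bump_isDensity (C : Cfg δ Δ k vA s d η ρL ρH) {D lo w : ℝ} (hD : 2 * ρH * Δ ≤ D)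
    (hw : 0 < w) (hlo : s ≤ lo) (hhi : lo + 2 * w ≤ s + η) :
    IsValueDensity (δ / 3) D (bumpDen k vA s d ρL ρH δ lo w) := by
  have hs := C.hs; have hsη := C.sη_le; have ht := C.t_le; have hd := C.hd
  have hH := C.hH; have hδ := C.hδ; have hδΔ := C.hδΔ
  have h1 : lo + 2 * w ≤ 1 := by nlinarith
  refine ⟨C.measurable_base.add (measurable_bump _ _ _), fun x hx => ?_, ?_⟩
  · unfold bumpDen
    by_cases hxb : x ∈ Set.Ioc lo (lo + 2 * w)
    · have hxs : x ∈ highSet k s d :=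
        C.Ioc_sub_high ⟨by linarith [hxb.1], by nlinarith [hxb.2]⟩
      rw [highSet_eq] at hxs
      have e : baseDen k vA s d ρL ρH x = ρH * vA x := by simp [baseDen, hxs.2]
      have hb := abs_le.1 (abs_bump_le lo w _ C.h_nonneg x)
      obtain ⟨a1, a2⟩ := C.hv.2.1 x hx
      have a3 : ρH * δ ≤ ρH * vA x := mul_le_mul_of_nonneg_left a1 (by linarith)
      have a4 : ρH * vA x ≤ ρH * Δ := mul_le_mul_of_nonneg_left a2 (by linarith)
      have a5 : ρH * δ ≤ ρH * Δ := mul_le_mul_of_nonneg_left hδΔ (by linarith)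
      have a6 : 2 * δ ≤ ρH * δ := mul_le_mul_of_nonneg_right hH (by linarith)
      rw [e]
      constructor
      · linarith [hb.1]
      · linarith [hb.2]
    · rw [bump_eq_zero hw.le hxb, add_zero]
      exact (C.base_isDensity hD).2.1 x hx
  · have s1 : Set.Icc (0:ℝ) 1 ∩ Set.Ioc (lo + w) (lo + 2 * w) = Set.Ioc (lo + w) (lo + 2 * w) :=
      Set.inter_eq_right.2 (fun x hx => ⟨by linarith [hx.1], by linarith [hx.2]⟩)
    have s2 : Set.Icc (0:ℝ) 1 ∩ Set.Ioc lo (lo + w) = Set.Ioc lo (lo + w) :=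
      Set.inter_eq_right.2 (fun x hx => ⟨by linarith [hx.1], by linarith [hx.2]⟩)
    rw [C.bump_int lo w le_rfl, C.base_total, integral_bump _ _ _ measurableSet_Icc le_rfl, s1, s2,
      Real.volume_real_Ioc_of_le (by linarith), Real.volume_real_Ioc_of_le (by linarith)]
    ring

lemma Cfg.bump_stack (C : Cfg δ Δ k vA s d η ρL ρH) {lo w : ℝ}
    (hw : 0 < w) (hlo : s ≤ lo) (hhi : lo + 2 * w ≤ s + η) :
    optU k vA s d η + δ * w / 2 ≤ stackelbergValue k vA (bumpDen k vA s d ρL ρH δ lo w) := by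
  have hs := C.hs; have hsη := C.sη_le; have ht := C.t_le; have hd := C.hd
  have hH := C.hH; have hδ := C.hδ; have hδΔ := C.hδΔ; have hηd := C.hηd
  have hden := C.bump_isDensity (D := 2 * ρH * Δ) le_rfl hw hlo hhi
  have hE := den_Ioc_add C.hv (x := s) (y := lo + w) (z := s + η) hs.le (by linarith)
    (by linarith) (by nlinarith)
  have hE1 : 0 ≤ ∫ x in Set.Ioc s (lo + w), vA x :=
    den_nonneg hδ C.hv (fun x hx => ⟨by linarith [hx.1], by nlinarith [hx.2]⟩) measurableSet_Ioc
  have hE2 : 0 ≤ ∫ x in Set.Ioc (lo + w) (s + η), vA x :=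
    den_nonneg hδ C.hv (fun x hx => ⟨by linarith [hx.1], by nlinarith [hx.2]⟩) measurableSet_Ioc
  have hE3 := C.hE
  have hlow := den_Ioc_lower C.hv (x := s + η) (y := s + (k + 1) * d) (by linarith [C.hη])
    (by nlinarith) ht
  have hlow2 : δ * d ≤ δ * (s + (k + 1) * d - (s + η)) :=
    mul_le_mul_of_nonneg_left (by nlinarith) hδ.le
  have hwd : δ * w ≤ δ * d := mul_le_mul_of_nonneg_left (by linarith) hδ.le
  obtain ⟨q, ⟨hq1, hq2⟩, hq⟩ := den_ivt C.hv (x := s + η) (y := s + (k + 1) * d)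
    (r := (∫ x in Set.Ioc (lo + w) (s + η), vA x) + δ * w / 2) (by linarith [C.hη])
    (by nlinarith) ht (by positivity) (by linarith)
  have hp : s ≤ lo + w := by linarith
  have hpq : lo + w ≤ q := by linarith
  obtain ⟨e1, e2⟩ := C.mod_vals hp hpq hq2
  have hb : ∫ x in hPiece (modCuts k s d (lo + w) q) true, bump lo w (ρH * δ / 2) x =
      ρH * δ / 2 * (0 - w) := by
    rw [integral_bump _ _ _ (measurableSet_hPiece _ _) (hPiece_subset _ _),
      C.mod_piece hp hpq hq2]
    have s1 : (lowSet k s d ∪ (Set.Ioc s (lo + w) ∪ Set.Ioc q (s + (k + 1) * d))) ∩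
        Set.Ioc (lo + w) (lo + 2 * w) = ∅ := by
      ext x
      simp only [Set.mem_empty_iff_false, iff_false]
      rintro ⟨h | h | h, hx⟩
      · have : x ∈ highSet k s d := C.Ioc_sub_high ⟨by linarith [hx.1], by nlinarith [hx.2]⟩
        rw [highSet_eq] at this
        exact this.2 h
      · linarith [h.2, hx.1]
      · linarith [h.1, hx.2]
    have s2 : (lowSet k s d ∪ (Set.Ioc s (lo + w) ∪ Set.Ioc q (s + (k + 1) * d))) ∩
        Set.Ioc lo (lo + w) = Set.Ioc lo (lo + w) := by
      apply Set.inter_eq_right.2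
      intro x hx
      exact Or.inr (Or.inl ⟨by linarith [hx.1], hx.2⟩)
    rw [s1, s2, Real.volume_real_Ioc_of_le (by linarith)]
    simp
  have e3 := stack_lower C.hδ C.hv (den_intOn hden le_rfl) hden.2.2
    (C.modCuts_valid hp hpq hq2) (by
      rw [C.bump_int lo w (hPiece_subset _ _), e2, hb, hq, ← C.eq2, hE]
      apply le_of_eq
      ring)
  refine le_trans (le_of_eq ?_) e3
  rw [e1, hq]
  unfold optU
  rw [hE]
  ring

/-! ### Stability of Bob's choices and the transcript argument -/

lemma myopic_pref (vA v : ℝ → ℝ) (T : ℕ) (h : Hist k) (c : Fin k → ℝ) :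
    pieceVal v (altPiece k c (!(myopicBob k vA v T h c))) ≤
      pieceVal v (altPiece k c (myopicBob k vA v T h c)) := by
  unfold myopicBob
  split_ifs <;> simp only [Bool.not_true, Bool.not_false] <;> linarith

lemma myopic_stable (vA v v' : ℝ → ℝ) (T : ℕ) (h : Hist k) (c : Fin k → ℝ) (β : Bool)
    (hβ : myopicBob k vA v T h c = β)
    (h1 : pieceVal v' (altPiece k c (!β)) ≤ pieceVal v (altPiece k c (!β)))
    (h2 : pieceVal v (altPiece k c β) ≤ pieceVal v' (altPiece k c β)) :
    myopicBob k vA v' T h c = β := by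
  unfold myopicBob at *
  cases β <;> simp only [Bool.not_true, Bool.not_false] at h1 h2
  · split_ifs at hβ ⊢ <;> first | rfl | (exfalso; linarith)
  · split_ifs at hβ ⊢ <;> first | rfl | (exfalso; linarith)

lemma playHist_eq (SA : AliceStrategy k) (SB SB' : BobStrategy k) (T : ℕ)
    (h : ∀ t < T, SB' T (playHist k SA SB T t) (SA T (playHist k SA SB T t)) =
      SB T (playHist k SA SB T t) (SA T (playHist k SA SB T t))) :
    ∀ t ≤ T, playHist k SA SB' T t = playHist k SA SB T t := by
  intro t
  induction t with
  | zero => intro _; rfl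
  | succ n ih =>
    intro hn
    have := ih (by omega)
    simp only [playHist, this]
    rw [h n (by omega)]

lemma Cfg.half (_C : Cfg δ Δ k vA s d η ρL ρH) {v : ℝ → ℝ} {D : ℝ}
    (hv : IsValueDensity (δ / 3) D v) (T : ℕ) (h : Hist k) {c : Fin k → ℝ} (hc : ValidCuts k c) :
    ∫ x in hPiece c (!(myopicBob k vA v T h c)), v x ≤ 1 / 2 := by
  have h1 := myopic_pref vA v T h c
  rw [pieceVal_alt hc, pieceVal_alt hc] at h1
  have h2 := piece_compl (den_intOn hv le_rfl) hv.2.2 c (myopicBob k vA v T h c)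
  linarith

lemma Cfg.choice_stable (C : Cfg δ Δ k vA s d η ρL ρH) {lo w : ℝ}
    (hw : 0 < w) (hlo : s ≤ lo) (hhi : lo + 2 * w ≤ s + η) (T : ℕ) (h : Hist k)
    {c : Fin k → ℝ} (hc : ValidCuts k c)
    (hyp : (∀ j, c j ∉ Set.Ico lo (lo + 2 * w)) ∨ optU k vA s d η - δ * d / 8 <
      ∫ x in hPiece c (!(myopicBob k vA (baseDen k vA s d ρL ρH) T h c)), vA x) :
    myopicBob k vA (bumpDen k vA s d ρL ρH δ lo w) T h c =
      myopicBob k vA (baseDen k vA s d ρL ρH) T h c := by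
  have hs := C.hs; have hsη := C.sη_le; have ht := C.t_le; have hd := C.hd
  have hden := C.bump_isDensity (D := 2 * ρH * Δ) le_rfl hw hlo hhi
  have hbase := C.base_isDensity (D := 2 * ρH * Δ) le_rfl
  have hhalf := C.half hbase T h hc
  generalize hβ : myopicBob k vA (baseDen k vA s d ρL ρH) T h c = β at *
  have key : ∫ x in hPiece c (!β), bump lo w (ρH * δ / 2) x ≤ 0 := by
    rcases hyp with h1 | h1
    · exact le_of_eq (integral_bump_of_no_cut c _ hw.le (by linarith) (by nlinarith) h1)
    · apply integral_bump_nonpos (measurableSet_hPiece _ _) (hPiece_subset _ _) hw.le C.h_nonneg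
      intro x hx y hy hxy hyZ
      exact C.structure_lemma c _ hhalf h1 ⟨by linarith [hx.1], by linarith [hx.2]⟩
        ⟨by linarith [hy.1], by linarith [hy.2]⟩ hxy hyZ
  have e1 := C.bump_int lo w (hPiece_subset c (!β))
  have e2 := piece_compl (den_intOn hden le_rfl) hden.2.2 c β
  have e3 := piece_compl (den_intOn hbase le_rfl) hbase.2.2 c β
  apply myopic_stable vA (baseDen k vA s d ρL ρH) _ T h c β hβ
  · rw [pieceVal_alt hc, pieceVal_alt hc]; linarith
  · rw [pieceVal_alt hc, pieceVal_alt hc]; linarith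

lemma Cfg.main (C : Cfg δ Δ k vA s d η ρL ρH) {D : ℝ} (hD : 2 * ρH * Δ ≤ D)
    (SA : AliceStrategy k) (hSA : AliceValid k SA) (T m : ℕ) (hm : 1 ≤ m) (R : ℝ)
    (hR1 : R ≤ m / k * (δ * d / 8)) (hR2 : R ≤ T * (δ * (η / (2 * m)) / 2)) :
    ∃ vB, IsValueDensity (δ / 3) D vB ∧ R ≤ aliceRegret k vA vB SA (myopicBob k vA vB) T := by
  set vb := baseDen k vA s d ρL ρH with hvb
  have hbase : IsValueDensity (δ / 3) D vb := C.base_isDensity hD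
  have hk0 : (0:ℝ) < k := by linarith [C.kpos]
  have hm0 : (0:ℝ) < m := by exact_mod_cast hm
  have hδd : 0 < δ * d := mul_pos C.hδ C.hd
  let cu : ℕ → Fin k → ℝ := fun t => roundCuts k SA (myopicBob k vA vb) T t
  let ut : ℕ → ℝ := fun t =>
    ∫ x in hPiece (cu t) (!(roundChoice k SA (myopicBob k vA vb) T t)), vA x
  have hcu : ∀ t, ValidCuts k (cu t) := fun t => hSA _ _
  have hut : ∀ t, ut t ≤ optU k vA s d η := fun t =>
    C.upper (measurableSet_hPiece _ _) (hPiece_subset _ _) (C.half hbase T _ (hcu t))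
  let bad : Finset ℕ := (Finset.range T).filter (fun t => ut t ≤ optU k vA s d η - δ * d / 8)
  by_cases hcard : m ≤ bad.card * k
  · refine ⟨vb, hbase, hR1.trans ?_⟩
    have hst := C.base_stack
    have h1 : (m : ℝ) / k ≤ bad.card := by
      rw [div_le_iff₀ hk0]
      exact_mod_cast hcard
    calc (m : ℝ) / k * (δ * d / 8) ≤ bad.card * (δ * d / 8) :=
          mul_le_mul_of_nonneg_right h1 (by positivity)
      _ = ∑ t ∈ bad, (δ * d / 8) := by simp
      _ ≤ ∑ t ∈ bad, (stackelbergValue k vA vb - ut t) := by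
          apply Finset.sum_le_sum
          intro t ht
          have := (Finset.mem_filter.1 ht).2
          linarith
      _ ≤ ∑ t ∈ Finset.range T, (stackelbergValue k vA vb - ut t) := by
          apply Finset.sum_le_sum_of_subset_of_nonneg (Finset.filter_subset _ _)
          intro t _ _
          have := hut t
          linarith
      _ = aliceRegret k vA vb SA (myopicBob k vA vb) T := by
          unfold aliceRegret
          apply Finset.sum_congr rfl
          intro t _
          rw [pieceVal_alt (hcu t)]
  · push Not at hcard
    set w : ℝ := η / (2 * m) with hwdef
    have hw : 0 < w := div_pos C.hη (by positivity)
    have hwm : 2 * w * m = η := by rw [hwdef]; field_simp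
    let f : ℕ × Fin k → ℕ := fun a => ⌊(cu a.1 a.2 - s) / (2 * w)⌋₊
    have himg : ((bad ×ˢ (Finset.univ : Finset (Fin k))).image f).card < (Finset.range m).card := by
      refine lt_of_le_of_lt Finset.card_image_le ?_
      simpa using hcard
    obtain ⟨i, him, hi⟩ := Finset.exists_mem_notMem_of_card_lt_card himg
    have him' : i + 1 ≤ m := Finset.mem_range.1 him
    have himr : (i : ℝ) + 1 ≤ m := by exact_mod_cast him'
    set lo : ℝ := s + 2 * w * i with hlodef
    have hlo : s ≤ lo := by rw [hlodef]; have : 0 ≤ 2 * w * i := by positivity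
                            linarith
    have hhi : lo + 2 * w ≤ s + η := by rw [hlodef, ← hwm]; nlinarith
    have huntouched : ∀ t ∈ bad, ∀ j, cu t j ∉ Set.Ico lo (lo + 2 * w) := by
      intro t ht j hj
      apply hi
      refine Finset.mem_image.2 ⟨(t, j), by simp [ht], ?_⟩
      show ⌊(cu t j - s) / (2 * w)⌋₊ = i
      rw [Nat.floor_eq_iff]
      · constructor
        · rw [le_div_iff₀ (by positivity)]
          have := hj.1
          rw [hlodef] at this; linarith
        · rw [div_lt_iff₀ (by positivity)]
          have := hj.2
          rw [hlodef] at this; linarith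
      · apply div_nonneg _ (by positivity)
        linarith [hj.1]
    set v' := bumpDen k vA s d ρL ρH δ lo w with hv'
    refine ⟨v', C.bump_isDensity hD hw hlo hhi, hR2.trans ?_⟩
    have hsame : ∀ t < T, myopicBob k vA v' T (playHist k SA (myopicBob k vA vb) T t)
        (SA T (playHist k SA (myopicBob k vA vb) T t)) =
        myopicBob k vA vb T (playHist k SA (myopicBob k vA vb) T t)
        (SA T (playHist k SA (myopicBob k vA vb) T t)) := by
      intro t ht
      apply C.choice_stable hw hlo hhi T _ (hcu t)
      by_cases hb : t ∈ bad
      · left; exact huntouched t hb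
      · right
        simp only [bad, Finset.mem_filter, Finset.mem_range, not_and, not_le] at hb
        exact hb ht
    have hhist := playHist_eq SA (myopicBob k vA vb) (myopicBob k vA v') T hsame
    have hst := C.bump_stack hw hlo hhi
    calc (T : ℝ) * (δ * w / 2) = ∑ t ∈ Finset.range T, (δ * w / 2) := by simp
      _ ≤ ∑ t ∈ Finset.range T, (stackelbergValue k vA v' - ut t) := by
          apply Finset.sum_le_sum
          intro t _
          have := hut t
          linarith
      _ = aliceRegret k vA v' SA (myopicBob k vA v') T := by
          unfold aliceRegret
          apply Finset.sum_congr rfl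
          intro t ht
          have ht' := Finset.mem_range.1 ht
          have e1 : roundCuts k SA (myopicBob k vA v') T t = cu t := by
            simp only [cu, roundCuts, hhist t ht'.le]
          have e2 : roundChoice k SA (myopicBob k vA v') T t =
              roundChoice k SA (myopicBob k vA vb) T t := by
            simp only [roundChoice, roundCuts, hhist t ht'.le]
            exact hsame t ht'
          rw [e1, e2, pieceVal_alt (hcu t)]

end cfg

/-! ### Existence of a configuration -/

set_option maxHeartbeats 1000000 in
lemma exists_cfg {δ Δ : ℝ} (hδ : 0 < δ) (hδΔ : δ ≤ Δ) {k : ℕ} (hk : 2 ≤ k) {vA : ℝ → ℝ}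
    (hv : IsValueDensity δ Δ vA) :
    ∃ s d η ρL ρH : ℝ, Cfg δ Δ k vA s d η ρL ρH ∧ ρH * δ ≤ 6 * Δ ∧ 1 ≤ 8 * Δ * k * d ∧
      η = δ * d / (4 * Δ) := by
  have hΔ : 0 < Δ := by linarith
  have hkr : (2:ℝ) ≤ k := by exact_mod_cast hk
  have h01 : ∫ x in Set.Ioc (0:ℝ) 1, vA x = 1 := by
    rw [← integral_Icc_eq_integral_Ioc]; exact hv.2.2
  obtain ⟨s, ⟨hs0, hs1⟩, hs⟩ := den_ivt hv (x := 0) (y := 1) (r := 1 / 4) le_rfl zero_le_one le_rfl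
    (by norm_num) (by rw [h01]; norm_num)
  have hsplit := den_Ioc_add hv le_rfl hs0 hs1 le_rfl
  rw [h01, hs] at hsplit
  have hA0 : ∫ x in Set.Ioc (0:ℝ) s, vA x = 3 / 4 := by linarith
  have hspos : 0 < s := by
    rcases hs0.lt_or_eq with h | h
    · exact h
    · rw [← h] at hA0; norm_num at hA0
  have hup := den_Ioc_upper hv hs0 hs1 le_rfl
  have hlow := den_Ioc_lower hv hs0 hs1 le_rfl
  rw [hs] at hup hlow
  have hs1' : 0 < 1 - s := by
    by_contra h
    nlinarith
  obtain ⟨d, hd⟩ : ∃ d, d = (1 - s) / (2 * k) := ⟨_, rfl⟩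
  have hd0 : 0 < d := by rw [hd]; positivity
  have hdk : 2 * k * d = 1 - s := by rw [hd]; field_simp
  obtain ⟨η, hη⟩ : ∃ η, η = δ * d / (4 * Δ) := ⟨_, rfl⟩
  have hη0 : 0 < η := by rw [hη]; positivity
  have hηΔ : Δ * η = δ * d / 4 := by rw [hη]; field_simp
  have hηd : η ≤ d / 4 := by
    rw [hη, div_le_div_iff₀ (by positivity) (by norm_num)]
    nlinarith
  have hkd : 2 * d ≤ k * d := mul_le_mul_of_nonneg_right hkr hd0.le
  have ht : s + (k + 1) * d ≤ 1 := by nlinarith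
  have hE : ∫ x in Set.Ioc s (s + η), vA x ≤ δ * d / 4 := by
    have := den_Ioc_upper hv hs0 (y := s + η) (by linarith) (by nlinarith)
    rw [← hηΔ]
    simpa using this
  have hE0 : 0 ≤ ∫ x in Set.Ioc s (s + η), vA x :=
    den_nonneg hδ hv (fun x hx => ⟨by linarith [hx.1], by nlinarith [hx.2]⟩) measurableSet_Ioc
  have hHlow : δ * ((k + 1) * d) ≤ ∫ x in highSet k s d, vA x := by
    have h1 := den_Ioc_lower hv hs0 (y := s + (k + 1) * d) (by nlinarith) ht
    have h2 := den_mono hδ hv (S := Set.Ioc s (s + (k + 1) * d)) (S' := highSet k s d)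
      (hPiece_subset _ _) (measurableSet_hPiece _ _) (by
        intro x hx
        refine ⟨⟨by linarith [hx.1], by linarith [hx.2]⟩, ?_⟩
        rw [base_idx_one hk hd0 hx]; rfl)
    have h3 : s + (k + 1) * d - s = (k + 1) * d := by ring
    rw [h3] at h1
    linarith
  have hLlow : 3 / 4 ≤ ∫ x in lowSet k s d, vA x := by
    rw [← hA0]
    apply den_mono hδ hv (hPiece_subset _ _) (measurableSet_hPiece _ _)
    intro x hx
    refine ⟨⟨hx.1.le, by linarith [hx.2]⟩, ?_⟩
    rw [base_idx_zero hd0 hx.2]; rfl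
  have hsum : (∫ x in lowSet k s d, vA x) + ∫ x in highSet k s d, vA x = 1 := by
    have h := int_split (k := k) (s := s) (d := d) measurableSet_Icc le_rfl (den_intOn hv le_rfl)
    have e1 : Set.Icc (0:ℝ) 1 ∩ lowSet k s d = lowSet k s d :=
      Set.inter_eq_right.2 (hPiece_subset _ _)
    have e2 : Set.Icc (0:ℝ) 1 ∩ highSet k s d = highSet k s d :=
      Set.inter_eq_right.2 (hPiece_subset _ _)
    rw [e1, e2, hv.2.2] at h
    exact h.symm
  obtain ⟨l, hl⟩ : ∃ l, l = ∫ x in lowSet k s d, vA x := ⟨_, rfl⟩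
  obtain ⟨H, hH⟩ : ∃ H, H = ∫ x in highSet k s d, vA x := ⟨_, rfl⟩
  obtain ⟨E, hEE⟩ : ∃ E, E = ∫ x in Set.Ioc s (s + η), vA x := ⟨_, rfl⟩
  rw [← hl] at hLlow
  rw [← hH] at hHlow
  rw [← hl, ← hH] at hsum
  rw [← hEE] at hE hE0
  have hδd : 0 < δ * d := mul_pos hδ hd0
  have hδkd : δ * (2 * d) ≤ δ * (k * d) := mul_le_mul_of_nonneg_left hkd hδ.le
  have hEH : 4 * E ≤ H := by nlinarith
  have hHpos : 0 < H := by nlinarith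
  have hHE : 0 < H - E := by linarith
  obtain ⟨ρH, hρH⟩ : ∃ ρH, ρH = 1 / (2 * (H - E)) := ⟨_, rfl⟩
  have hρ1 : ρH * (H - E) = 1 / 2 := by rw [hρH]; field_simp
  have hρ0 : 0 < ρH := by rw [hρH]; positivity
  have hρE : ρH * E ≤ 1 / 6 := by nlinarith
  have hρE0 : 0 ≤ ρH * E := by positivity
  obtain ⟨ρL, hρL⟩ : ∃ ρL, ρL = (1 / 2 - ρH * E) / l := ⟨_, rfl⟩
  have hl0 : 0 < l := by linarith
  have hρLl : ρL * l = 1 / 2 - ρH * E := by rw [hρL]; field_simp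
  refine ⟨s, d, η, ρL, ρH, ⟨hδ, hδΔ, hk, hv, hspos, hd0, by linarith, hη0, hηd, ?_, ?_, ?_, ?_, ?_,
    ?_, ?_⟩, ?_, ?_, hη⟩
  · rw [hA0]; nlinarith
  · rw [← hEE]; exact hE
  · rw [hρL, le_div_iff₀ hl0]; linarith
  · rw [hρL, div_le_iff₀ hl0]; linarith
  · rw [hρH, le_div_iff₀ (by positivity)]; linarith
  · rw [← hl, ← hH, hρLl]; linarith
  · rw [← hl, ← hEE, hρLl]; ring
  · -- `ρH * δ ≤ 6 Δ`
    have h1 : δ * ((1 - s) / 2) ≤ H := by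
      have : (1 - s) / 2 = k * d := by linarith
      rw [this]; nlinarith
    have h2 : δ ≤ 8 * Δ * H := by nlinarith
    have h3 : ρH * H ≤ 2 / 3 := by linarith
    calc ρH * δ ≤ ρH * (8 * Δ * H) := mul_le_mul_of_nonneg_left h2 hρ0.le
      _ = 8 * Δ * (ρH * H) := by ring
      _ ≤ 8 * Δ * (2 / 3) := mul_le_mul_of_nonneg_left h3 (by positivity)
      _ ≤ 6 * Δ := by linarith
  · have : 8 * Δ * k * d = 4 * (Δ * (1 - s)) := by rw [← hdk]; ring
    rw [this]; linarith

/-- `k ≥ 2` cuts, myopic Bob, lower bound: for all `0 < δ ≤ Δ` there exist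
`c > 0` and `T₀`, and density bounds `0 < δ' ≤ Δ'` depending only on `δ, Δ`, such that for
every `k ≥ 2`, every Alice value density, every valid deterministic Alice strategy, and every
horizon `T ≥ T₀`, some Bob value density forces Alice's Stackelberg regret against the myopic
Bob to be at least `c·√T/k^{3/2}`. -/
theorem k_cut_myopic_lower (δ Δ : ℝ) (hδ : 0 < δ) (hδΔ : δ ≤ Δ) :
    ∃ (c : ℝ) (T₀ : ℕ) (δ' Δ' : ℝ), 0 < c ∧ 0 < δ' ∧ δ' ≤ Δ' ∧
      ∀ k : ℕ, 2 ≤ k →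
        ∀ vA : ℝ → ℝ, IsValueDensity δ Δ vA →
          ∀ SA : AliceStrategy k, AliceValid k SA →
            ∀ T : ℕ, T₀ ≤ T →
              ∃ vB : ℝ → ℝ, IsValueDensity δ' Δ' vB ∧
                c * Real.sqrt T / (k : ℝ) ^ ((3 : ℝ) / 2) ≤
                  aliceRegret k vA vB SA (myopicBob k vA vB) T := by
  have hΔ : 0 < Δ := by linarith
  refine ⟨δ ^ 2 / (256 * Δ ^ 2), 1, δ / 3, 12 * Δ ^ 2 / δ, by positivity, by positivity, ?_, ?_⟩
  · rw [div_le_div_iff₀ (by norm_num) hδ]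
    nlinarith
  intro k hk vA hv SA hSA T hT
  obtain ⟨s, d, η, ρL, ρH, C, hρ, hd, hη⟩ := exists_cfg hδ hδΔ hk hv
  have hkr : (2:ℝ) ≤ k := by exact_mod_cast hk
  have hTr : (1:ℝ) ≤ T := by exact_mod_cast hT
  obtain ⟨a, ha⟩ : ∃ a, a = Real.sqrt k := ⟨_, rfl⟩
  obtain ⟨b, hb⟩ : ∃ b, b = Real.sqrt T := ⟨_, rfl⟩
  have ha2 : a * a = k := by rw [ha]; exact Real.mul_self_sqrt (by linarith)
  have hb2 : b * b = T := by rw [hb]; exact Real.mul_self_sqrt (by linarith)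
  have ha1 : 1 ≤ a := by rw [ha]; exact Real.one_le_sqrt.2 (by linarith)
  have hb1 : 1 ≤ b := by rw [hb]; exact Real.one_le_sqrt.2 hTr
  have hpow : (k : ℝ) ^ ((3 : ℝ) / 2) = a * a * a := by
    rw [show (3:ℝ) / 2 = 1 + 1 / 2 by norm_num, Real.rpow_add (by linarith), Real.rpow_one,
      ← Real.sqrt_eq_rpow, ← ha, ← ha2]
  have hd0 := C.hd
  have hab : 1 ≤ a * b := by nlinarith
  have hm1 : a * b ≤ (⌈a * b⌉₊ : ℝ) := Nat.le_ceil _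
  have hm2 : (⌈a * b⌉₊ : ℝ) ≤ 2 * (a * b) := by
    have := Nat.ceil_lt_add_one (a := a * b) (by linarith)
    linarith
  have hm0 : 1 ≤ ⌈a * b⌉₊ := by
    rw [Nat.one_le_ceil_iff]; linarith
  have hmpos : (0:ℝ) < (⌈a * b⌉₊ : ℝ) := by linarith
  refine C.main ?_ SA hSA T ⌈a * b⌉₊ hm0 _ ?_ ?_
  · rw [le_div_iff₀ hδ]
    nlinarith
  · rw [hpow, ← hb, ← ha2]
    rw [← ha2] at hd
    have hd' : 1 / (8 * Δ * (a * a)) ≤ d := by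
      rw [div_le_iff₀ (by positivity)]; linarith
    calc δ ^ 2 / (256 * Δ ^ 2) * b / (a * a * a)
        ≤ (δ * Δ) / (64 * Δ ^ 2) * b / (a * a * a) := by
          gcongr
          · nlinarith
          · norm_num
      _ = (a * b) / (a * a) * (δ * (1 / (8 * Δ * (a * a))) / 8) := by
          field_simp
          norm_num
      _ ≤ _ := by gcongr
  · rw [hpow, ← hb, ← hb2, hη]
    rw [← ha2] at hd
    have hd' : 1 / (8 * Δ * (a * a)) ≤ d := by
      rw [div_le_iff₀ (by positivity)]; linarith
    calc δ ^ 2 / (256 * Δ ^ 2) * b / (a * a * a)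
        = (b * b) * (δ * ((δ * (1 / (8 * Δ * (a * a))) / (4 * Δ)) / (2 * (2 * (a * b)))) / 2) := by
          field_simp
          norm_num
      _ ≤ _ := by gcongr

end
end

section
/- Fix constants 0 < δ ≤ Δ and α ∈ (−1/2, 1). For every Alice value density v_A there exists a deterministic Alice strategy S_A for the repeated 2-cut game (depending on α but not on the constant c below) such that: for every c > 0 there exist C > 0 and T₀ ∈ ℕ with the property that for every Bob value density v_B, every deterministic Bob strategy that guarantees regret at most c·T'^α for every horizon T', and every horizon T ≥ T₀, Alice's Stackelberg regret under S_A over horizon T is at most C·T^{(2+α)/3}·(log T)^{2/3}. -/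
open MeasureTheory Set

noncomputable section

attribute [local instance] Classical.propDecidable

/-- The cumulative value function of a density. -/
def cumVal (v : ℝ → ℝ) (x : ℝ) : ℝ := ∫ y in (0:ℝ)..x, v y

lemma density_intOn {δ Δ : ℝ} {v : ℝ → ℝ} (h : IsValueDensity δ Δ v) :
    IntegrableOn v (Icc 0 1) := by
  obtain ⟨hm, hb, -⟩ := h
  refine Measure.integrableOn_of_bounded (M := max |δ| |Δ|) (by simp) hm.aestronglyMeasurable ?_
  rw [ae_restrict_iff' measurableSet_Icc]
  refine Filter.Eventually.of_forall fun x hx => ?_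
  have := hb x hx
  rw [Real.norm_eq_abs]
  exact abs_le_max_abs_abs this.1 this.2

lemma density_ii {δ Δ : ℝ} {v : ℝ → ℝ} (h : IsValueDensity δ Δ v) {x y : ℝ}
    (hx : x ∈ Icc (0:ℝ) 1) (hy : y ∈ Icc (0:ℝ) 1) : IntervalIntegrable v volume x y := by
  refine IntegrableOn.intervalIntegrable ((density_intOn h).mono_set ?_)
  exact uIcc_subset_Icc hx hy

lemma cumVal_sub {δ Δ : ℝ} {v : ℝ → ℝ} (h : IsValueDensity δ Δ v) {x y : ℝ}
    (hx : x ∈ Icc (0:ℝ) 1) (hy : y ∈ Icc (0:ℝ) 1) :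
    cumVal v y - cumVal v x = ∫ z in x..y, v z := by
  unfold cumVal
  exact intervalIntegral.integral_interval_sub_left (density_ii h (by simp) hy)
    (density_ii h (by simp) hx)

lemma cumVal_zero (v : ℝ → ℝ) : cumVal v 0 = 0 := by simp [cumVal]

lemma cumVal_one {δ Δ : ℝ} {v : ℝ → ℝ} (h : IsValueDensity δ Δ v) : cumVal v 1 = 1 := by
  unfold cumVal
  rw [intervalIntegral.integral_of_le zero_le_one, ← integral_Icc_eq_integral_Ioc]
  exact h.2.2

lemma cumVal_lower {δ Δ : ℝ} {v : ℝ → ℝ} (h : IsValueDensity δ Δ v) {x y : ℝ}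
    (hx : 0 ≤ x) (hxy : x ≤ y) (hy : y ≤ 1) :
    δ * (y - x) ≤ cumVal v y - cumVal v x := by
  rw [cumVal_sub h ⟨hx, hxy.trans hy⟩ ⟨hx.trans hxy, hy⟩]
  have := intervalIntegral.integral_mono_on (f := fun _ => δ) (g := v) hxy (by simp)
    (density_ii h ⟨hx, hxy.trans hy⟩ ⟨hx.trans hxy, hy⟩)
    (fun z hz => (h.2.1 z ⟨hx.trans hz.1, hz.2.trans hy⟩).1)
  simpa [mul_comm] using this

lemma cumVal_upper {δ Δ : ℝ} {v : ℝ → ℝ} (h : IsValueDensity δ Δ v) {x y : ℝ}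
    (hx : 0 ≤ x) (hxy : x ≤ y) (hy : y ≤ 1) :
    cumVal v y - cumVal v x ≤ Δ * (y - x) := by
  rw [cumVal_sub h ⟨hx, hxy.trans hy⟩ ⟨hx.trans hxy, hy⟩]
  have := intervalIntegral.integral_mono_on (f := v) (g := fun _ => Δ) hxy 
    (density_ii h ⟨hx, hxy.trans hy⟩ ⟨hx.trans hxy, hy⟩) (by simp)
    (fun z hz => (h.2.1 z ⟨hx.trans hz.1, hz.2.trans hy⟩).2)
  simpa [mul_comm] using this

lemma altPiece_false (c : Fin 2 → ℝ) : altPiece 2 c false = Icc (c 0) (c 1) := by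
  ext x
  simp [altPiece, extCuts, Finset.range_add_one]

lemma altPiece_true (c : Fin 2 → ℝ) : altPiece 2 c true = Icc 0 (c 0) ∪ Icc (c 1) 1 := by
  ext x
  simp only [altPiece, Finset.mem_range, mem_iUnion, mem_union]
  constructor
  · rintro ⟨i, hi, hx⟩
    have : i = 0 ∨ i = 1 ∨ i = 2 := by omega
    rcases this with rfl | rfl | rfl
    · left; simpa [extCuts] using hx
    · simp at hx
    · right; simpa [extCuts] using hx
  · rintro (hx | hx)
    · exact ⟨0, by simp, by simpa [extCuts] using hx⟩
    · exact ⟨2, by simp, by simpa [extCuts] using hx⟩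

lemma icc_val {δ Δ : ℝ} {v : ℝ → ℝ} (h : IsValueDensity δ Δ v) {x y : ℝ}
    (hx : 0 ≤ x) (hxy : x ≤ y) (hy : y ≤ 1) :
    ∫ z in Icc x y, v z = cumVal v y - cumVal v x := by
  rw [cumVal_sub h ⟨hx, hxy.trans hy⟩ ⟨hx.trans hxy, hy⟩, integral_Icc_eq_integral_Ioc,
    intervalIntegral.integral_of_le hxy]

lemma piece_false {δ Δ : ℝ} {v : ℝ → ℝ} (h : IsValueDensity δ Δ v) {c : Fin 2 → ℝ}
    (hc : ValidCuts 2 c) : pieceVal v (altPiece 2 c false) = cumVal v (c 1) - cumVal v (c 0) := by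
  rw [altPiece_false, pieceVal, icc_val h (hc.2 0).1 (hc.1 (by simp)) (hc.2 1).2]

lemma piece_true {δ Δ : ℝ} {v : ℝ → ℝ} (h : IsValueDensity δ Δ v) {c : Fin 2 → ℝ}
    (hc : ValidCuts 2 c) :
    pieceVal v (altPiece 2 c true) = 1 - (cumVal v (c 1) - cumVal v (c 0)) := by
  have h01 : c 0 ≤ c 1 := hc.1 (by simp)
  rw [altPiece_true, pieceVal, setIntegral_union₀, icc_val h le_rfl (hc.2 0).1 (hc.2 0).2,
    icc_val h (hc.2 1).1 (hc.2 1).2 le_rfl, cumVal_zero, cumVal_one h]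
  · ring
  · have : Icc 0 (c 0) ∩ Icc (c 1) 1 ⊆ {c 0} := by
      rintro x ⟨hx, hx'⟩
      exact le_antisymm hx.2 (h01.trans hx'.1)
    exact measure_mono_null this (by simp)
  · exact measurableSet_Icc.nullMeasurableSet
  · exact (density_intOn h).mono_set (Icc_subset_Icc le_rfl (hc.2 0).2)
  · exact (density_intOn h).mono_set (Icc_subset_Icc (hc.2 1).1 le_rfl)

lemma mid_bounds {δ Δ : ℝ} (hδ : 0 < δ) {v : ℝ → ℝ} (h : IsValueDensity δ Δ v) {c : Fin 2 → ℝ}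
    (hc : ValidCuts 2 c) : 0 ≤ cumVal v (c 1) - cumVal v (c 0) ∧
      cumVal v (c 1) - cumVal v (c 0) ≤ 1 := by
  have h01 : c 0 ≤ c 1 := hc.1 (by simp)
  have h1 := cumVal_lower h (hc.2 0).1 h01 (hc.2 1).2
  have h2 := cumVal_lower h le_rfl (hc.2 0).1 (hc.2 0).2
  have h3 := cumVal_lower h (hc.2 1).1 (hc.2 1).2 le_rfl
  have e1 : 0 ≤ δ * (c 1 - c 0) := mul_nonneg hδ.le (by linarith)
  have e2 : 0 ≤ δ * (c 0 - 0) := mul_nonneg hδ.le (by linarith [(hc.2 0).1])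
  have e3 : 0 ≤ δ * (1 - c 1) := mul_nonneg hδ.le (by linarith [(hc.2 1).2])
  rw [cumVal_zero] at h2
  rw [cumVal_one h] at h3
  constructor <;> linarith

lemma piece_bounds {δ Δ : ℝ} (hδ : 0 < δ) {v : ℝ → ℝ} (h : IsValueDensity δ Δ v) {c : Fin 2 → ℝ}
    (hc : ValidCuts 2 c) (b : Bool) : 0 ≤ pieceVal v (altPiece 2 c b) ∧
      pieceVal v (altPiece 2 c b) ≤ 1 := by
  have := mid_bounds hδ h hc
  cases b
  · rw [piece_false h hc]; exact this
  · rw [piece_true h hc]; constructor <;> linarith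

/-- Grid points. -/
def gr (N n : ℕ) : ℝ := ((min n N : ℕ) : ℝ) / N

lemma gr_mem {N : ℕ} (hN : 0 < N) (n : ℕ) : gr N n ∈ Icc (0:ℝ) 1 := by
  have : (0:ℝ) < N := by exact_mod_cast hN
  refine ⟨by unfold gr; positivity, ?_⟩
  rw [gr, div_le_one this]
  exact_mod_cast min_le_right _ _

lemma gr_mono (N : ℕ) {m n : ℕ} (h : m ≤ n) : gr N m ≤ gr N n := by
  unfold gr
  gcongr

lemma gr_of_le {N n : ℕ} (h : n ≤ N) : gr N n = n / N := by
  rw [gr, min_eq_left h]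

lemma gr_of_ge {N n : ℕ} (hN : 0 < N) (h : N ≤ n) : gr N n = 1 := by
  have : (0:ℝ) < N := by exact_mod_cast hN
  rw [gr, min_eq_right h, div_self this.ne']

lemma gr_zero (N : ℕ) : gr N 0 = 0 := by simp [gr]

lemma gr_succ {N n : ℕ} (h : n < N) : gr N (n+1) = gr N n + 1 / N := by
  rw [gr_of_le h, gr_of_le h.le]; push_cast; ring

lemma gr_succ_le {N n : ℕ} : gr N (n+1) ≤ gr N n + 1 / N := by
  rcases lt_or_ge n N with h | h
  · rw [gr_succ h]
  · rw [gr, gr, min_eq_right h, min_eq_right (by omega)]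
    have : (0:ℝ) ≤ 1 / N := by positivity
    linarith

/-- A pair of cuts at p and max p q. -/
def mk2 (p q : ℝ) : Fin 2 → ℝ := ![p, max p q]

lemma mk2_valid {p q : ℝ} (hp : p ∈ Icc (0:ℝ) 1) (hq : q ∈ Icc (0:ℝ) 1) :
    ValidCuts 2 (mk2 p q) := by
  refine ⟨?_, ?_⟩
  · intro a b hab
    fin_cases a <;> fin_cases b <;> simp_all [mk2]
  · intro i
    fin_cases i
    · simpa [mk2] using hp
    · simp only [mk2]
      exact ⟨le_max_of_le_left hp.1, max_le hp.2 hq.2⟩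

/-- Alice's value of an offer (cuts, piece intended for Bob). -/
def offVal (v : ℝ → ℝ) (o : (Fin 2 → ℝ) × Bool) : ℝ := pieceVal v (altPiece 2 o.1 (!o.2))

/-- The better of two offers for Alice. -/
def better (v : ℝ → ℝ) (o o' : (Fin 2 → ℝ) × Bool) : (Fin 2 → ℝ) × Bool :=
  if offVal v o ≤ offVal v o' then o' else o

lemma better_left (v o o') : offVal v o ≤ offVal v (better v o o') := by
  unfold better; split_ifs with h
  · exact h
  · exact le_rfl

lemma better_right (v o o') : offVal v o' ≤ offVal v (better v o o') := by
  unfold better; split_ifs with h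
  · exact le_rfl
  · exact (not_le.mp h).le

lemma better_ind (P : (Fin 2 → ℝ) × Bool → Prop) (v o o') (h : P o) (h' : P o') :
    P (better v o o') := by
  unfold better; split_ifs <;> assumption

/-- Alice's internal state. -/
structure St where
  i : ℕ
  j : ℕ
  a : ℕ
  b : ℕ
  best : (Fin 2 → ℝ) × Bool

def initSt : St := ⟨0, 0, 0, 0, (mk2 0 1, false)⟩

def candMid (N i j : ℕ) : (Fin 2 → ℝ) × Bool := (mk2 (gr N (i-1)) (gr N (j+1)), false)

def candOut (N i j : ℕ) : (Fin 2 → ℝ) × Bool := (mk2 (gr N i) (gr N (j-1)), true)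

def stepSt (v : ℝ → ℝ) (N M : ℕ) (s : St) (ch : Bool) : St :=
  if N < s.i ∨ N < s.j then s
  else if ch = false then
    if s.a + 1 < M then ⟨s.i, s.j, s.a + 1, s.b, s.best⟩
    else ⟨s.i + 1, s.j, 0, 0, better v s.best (candMid N s.i s.j)⟩
  else
    if s.b + 1 < M then ⟨s.i, s.j, s.a, s.b + 1, s.best⟩
    else ⟨s.i, s.j + 1, 0, 0, better v s.best (candOut N s.i s.j)⟩

def cutSt (N : ℕ) (s : St) : Fin 2 → ℝ :=
  if N < s.i ∨ N < s.j then s.best.1 else mk2 (gr N s.i) (gr N s.j)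

def histSt (v : ℝ → ℝ) (N M : ℕ) (h : Hist 2) : St :=
  h.foldl (fun s p => stepSt v N M s p.2) initSt

def stratN (v : ℝ → ℝ) (N M : ℕ → ℕ) : AliceStrategy 2 := fun T h =>
  cutSt (N T) (histSt v (N T) (M T) h)

lemma step_valid (v : ℝ → ℝ) {N : ℕ} (hN : 0 < N) (M : ℕ) (s : St) (ch : Bool)
    (h : ValidCuts 2 s.best.1) : ValidCuts 2 (stepSt v N M s ch).best.1 := by
  unfold stepSt
  split_ifs
  · exact h
  · exact h
  · exact better_ind (fun o => ValidCuts 2 o.1) _ _ _ h (mk2_valid (gr_mem hN _) (gr_mem hN _))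
  · exact h
  · exact better_ind (fun o => ValidCuts 2 o.1) _ _ _ h (mk2_valid (gr_mem hN _) (gr_mem hN _))

lemma hist_valid (v : ℝ → ℝ) {N : ℕ} (hN : 0 < N) (M : ℕ) (h : Hist 2) :
    ValidCuts 2 (histSt v N M h).best.1 := by
  induction h using List.reverseRecOn with
  | nil => exact mk2_valid (by simp) (by simp)
  | append_singleton l p ih =>
    rw [histSt, List.foldl_append]
    exact step_valid v hN M _ _ ih

lemma cut_valid {N : ℕ} (hN : 0 < N) (s : St) (h : ValidCuts 2 s.best.1) :
    ValidCuts 2 (cutSt N s) := by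
  unfold cutSt
  split_ifs
  · exact h
  · exact mk2_valid (gr_mem hN _) (gr_mem hN _)

lemma strat_valid (v : ℝ → ℝ) (N M : ℕ → ℕ) (hN : ∀ T, 0 < N T) : AliceValid 2 (stratN v N M) :=
  fun T h => cut_valid (hN T) _ (hist_valid v (hN T) _ h)

lemma cumVal_mono {δ Δ : ℝ} (hδ : 0 < δ) {v : ℝ → ℝ} (h : IsValueDensity δ Δ v) {x y : ℝ}
    (hx : 0 ≤ x) (hxy : x ≤ y) (hy : y ≤ 1) : cumVal v x ≤ cumVal v y := by
  have := cumVal_lower h hx hxy hy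
  have : 0 ≤ δ * (y - x) := mul_nonneg hδ.le (by linarith)
  linarith

lemma mid_mk2 {δ Δ : ℝ} (hδ : 0 < δ) {v : ℝ → ℝ} (h : IsValueDensity δ Δ v) {p q : ℝ}
    (hp : p ∈ Icc (0:ℝ) 1) (hq : q ∈ Icc (0:ℝ) 1) :
    cumVal v (mk2 p q 1) - cumVal v (mk2 p q 0) = max 0 (cumVal v q - cumVal v p) := by
  simp only [mk2, Matrix.cons_val_zero, Matrix.cons_val_one]
  rcases le_total p q with hpq | hpq
  · have := cumVal_mono hδ h hp.1 hpq hq.2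
    rw [max_eq_right hpq, max_eq_right (by linarith)]
  · have := cumVal_mono hδ h hq.1 hpq hp.2
    rw [max_eq_left hpq, max_eq_left (by linarith)]; ring

/-- Bob's regret in one round. -/
def bobR (v : ℝ → ℝ) (c : Fin 2 → ℝ) (ch : Bool) : ℝ :=
  max (pieceVal v (altPiece 2 c true)) (pieceVal v (altPiece 2 c false)) -
    pieceVal v (altPiece 2 c ch)

lemma bobR_nonneg (v : ℝ → ℝ) (c : Fin 2 → ℝ) (ch : Bool) : 0 ≤ bobR v c ch := by
  unfold bobR
  cases ch
  · linarith [le_max_right (pieceVal v (altPiece 2 c true)) (pieceVal v (altPiece 2 c false))]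
  · linarith [le_max_left (pieceVal v (altPiece 2 c true)) (pieceVal v (altPiece 2 c false))]

/-- Signed Bob value of the stretch between grid points. -/
def Dg (v : ℝ → ℝ) (N i j : ℕ) : ℝ := cumVal v (gr N j) - cumVal v (gr N i)

structure PInv (vA vB : ℝ → ℝ) (ε : ℝ) (N M : ℕ) (s : St) (R : ℝ) : Prop where
  hR0 : 0 ≤ R
  hi : s.i ≤ N + 1
  hj : s.j ≤ N + 1
  ha : s.a < M
  hb : s.b < M
  low : Dg vB N s.i (s.j - 1) ≤ 1 / 2 + ε / 2
  high : s.i = 0 ∨ 1 / 2 - ε / 2 ≤ Dg vB N (s.i - 1) s.j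
  recMid : ∀ i' < s.i, ∃ j', Dg vB N i' (j' - 1) ≤ 1 / 2 + ε / 2 ∧
    offVal vA (candMid N i' j') ≤ offVal vA s.best
  recOut : ∀ j' < s.j, ∃ i', (i' = 0 ∨ 1 / 2 - ε / 2 ≤ Dg vB N (i' - 1) j') ∧
    offVal vA (candOut N i' j') ≤ offVal vA s.best
  valid : ValidCuts 2 s.best.1
  safe : 1 / 2 + ε / 2 ≤ pieceVal vB (altPiece 2 s.best.1 s.best.2)
  lieA : Dg vB N s.i s.j ≤ 1 / 2 - ε / 2 → s.a * ε ≤ R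
  lieB : 1 / 2 + ε / 2 ≤ Dg vB N s.i s.j → s.b * ε ≤ R

section
variable {δ Δ : ℝ} {vA vB : ℝ → ℝ} {N M : ℕ}

lemma Dg_mono_right (hδ : 0 < δ) (h : IsValueDensity δ Δ vB) (hN : 0 < N) (i : ℕ) {j j' : ℕ}
    (hj : j ≤ j') : Dg vB N i j ≤ Dg vB N i j' := by
  have := cumVal_mono hδ h (gr_mem hN j).1 (gr_mono N hj) (gr_mem hN j').2
  unfold Dg; linarith

lemma Dg_anti_left (hδ : 0 < δ) (h : IsValueDensity δ Δ vB) (hN : 0 < N) (j : ℕ) {i i' : ℕ}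
    (hi : i ≤ i') : Dg vB N i' j ≤ Dg vB N i j := by
  have := cumVal_mono hδ h (gr_mem hN i).1 (gr_mono N hi) (gr_mem hN i').2
  unfold Dg; linarith

lemma gain (h : IsValueDensity δ Δ vB) (hN : 0 < N) {n : ℕ} (hn : n < N) :
    δ / N ≤ cumVal vB (gr N (n+1)) - cumVal vB (gr N n) := by
  have := cumVal_lower h (gr_mem hN n).1 (gr_mono N (Nat.le_succ n)) (gr_mem hN (n+1)).2
  rw [Nat.succ_eq_add_one] at this
  have e := gr_succ hn
  calc δ / N = δ * (gr N (n+1) - gr N n) := by rw [e]; ring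
    _ ≤ _ := this

lemma candMid_safe (hδ : 0 < δ) (h : IsValueDensity δ Δ vB) (hN : 0 < N) (hε1 : δ / N < 1)
    {i j : ℕ} (hD : 1 / 2 - (δ / N) / 2 ≤ Dg vB N i j) :
    1 / 2 + (δ / N) / 2 ≤ pieceVal vB (altPiece 2 (candMid N i j).1 (candMid N i j).2) := by
  simp only [candMid]
  rw [piece_false h (mk2_valid (gr_mem hN _) (gr_mem hN _)),
    mid_mk2 hδ h (gr_mem hN _) (gr_mem hN _)]
  refine le_max_of_le_right ?_
  have m1 := cumVal_mono hδ h (gr_mem hN (i-1)).1 (gr_mono N (Nat.sub_le i 1)) (gr_mem hN i).2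
  have m2 := cumVal_mono hδ h (gr_mem hN j).1 (gr_mono N (Nat.le_succ j)) (gr_mem hN (j+1)).2
  rw [Nat.succ_eq_add_one] at m2
  unfold Dg at hD
  rcases lt_or_ge j N with hj | hj
  · have := gain h hN hj
    linarith
  · rcases Nat.eq_zero_or_pos i with rfl | hi
    · rw [Nat.zero_sub, gr_zero, cumVal_zero, gr_of_ge hN (by omega), cumVal_one h]
      linarith
    · rcases le_or_gt i N with hiN | hiN
      · have := gain h hN (n := i - 1) (by omega)
        rw [Nat.sub_add_cancel hi] at this
        linarith
      · rw [gr_of_ge hN hj, gr_of_ge hN hiN.le] at hD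
        linarith

lemma candOut_safe (hδ : 0 < δ) (h : IsValueDensity δ Δ vB) (hN : 0 < N) (hε1 : δ / N < 1)
    {i j : ℕ} (hjN : j ≤ N) (hD : Dg vB N i j ≤ 1 / 2 + (δ / N) / 2) :
    1 / 2 + (δ / N) / 2 ≤ pieceVal vB (altPiece 2 (candOut N i j).1 (candOut N i j).2) := by
  simp only [candOut]
  rw [piece_true h (mk2_valid (gr_mem hN _) (gr_mem hN _)),
    mid_mk2 hδ h (gr_mem hN _) (gr_mem hN _)]
  suffices max 0 (cumVal vB (gr N (j-1)) - cumVal vB (gr N i)) ≤ 1 / 2 - (δ / N) / 2 by linarith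
  refine max_le (by linarith) ?_
  unfold Dg at hD
  rcases Nat.eq_zero_or_pos j with rfl | hj
  · have := cumVal_mono hδ h le_rfl (gr_mem hN i).1 (gr_mem hN i).2
    rw [Nat.zero_sub, gr_zero]
    linarith
  · have := gain h hN (n := j - 1) (by omega)
    rw [Nat.sub_add_cancel hj] at this
    linarith

lemma inv_init (hδ : 0 < δ) (hB : IsValueDensity δ Δ vB) (hN : 0 < N) (hM : 0 < M)
    (hε1 : δ / N < 1) : PInv vA vB (δ / N) N M initSt 0 := by
  have hε : 0 < δ / N := by positivity
  have v0 : ValidCuts 2 (mk2 0 1) := mk2_valid (by simp) (by simp)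
  refine ⟨le_rfl, by simp [initSt], by simp [initSt], hM, hM, ?_, Or.inl rfl, ?_, ?_, v0, ?_, ?_, ?_⟩
  · simp [initSt, Dg]; linarith
  · simp [initSt]
  · simp [initSt]
  · simp only [initSt]
    rw [piece_false hB v0, mid_mk2 hδ hB (by simp) (by simp), cumVal_zero, cumVal_one hB]
    refine le_max_of_le_right (by linarith)
  · simp [initSt]
  · simp [initSt]

lemma inv_step (hδ : 0 < δ) (hB : IsValueDensity δ Δ vB) (hN : 0 < N)
    (hε1 : δ / N < 1) (s : St) (R : ℝ) (ch : Bool) (hI : PInv vA vB (δ / N) N M s R)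
    (hR : R + bobR vB (cutSt N s) ch < M * (δ / N)) :
    PInv vA vB (δ / N) N M (stepSt vA N M s ch) (R + bobR vB (cutSt N s) ch) := by
  have hε : 0 < δ / N := by positivity
  set ε := δ / N with hεdef
  have hr0 := bobR_nonneg vB (cutSt N s) ch
  have hR0 : 0 ≤ R + bobR vB (cutSt N s) ch := by linarith [hI.hR0]
  by_cases hterm : N < s.i ∨ N < s.j
  · rw [show stepSt vA N M s ch = s by simp [stepSt, hterm]]
    exact { hI with
      hR0 := hR0
      lieA := fun h => (hI.lieA h).trans (by linarith)
      lieB := fun h => (hI.lieB h).trans (by linarith) }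
  have hcut : cutSt N s = mk2 (gr N s.i) (gr N s.j) := by simp [cutSt, hterm]
  have hv := mk2_valid (gr_mem hN s.i) (gr_mem hN s.j)
  have hbob : bobR vB (cutSt N s) ch = max (1 - max 0 (Dg vB N s.i s.j)) (max 0 (Dg vB N s.i s.j)) -
      (if ch then 1 - max 0 (Dg vB N s.i s.j) else max 0 (Dg vB N s.i s.j)) := by
    rw [hcut, bobR]
    cases ch
    · rw [piece_false hB hv, piece_true hB hv, mid_mk2 hδ hB (gr_mem hN _) (gr_mem hN _)]; rfl
    · rw [piece_false hB hv, piece_true hB hv, mid_mk2 hδ hB (gr_mem hN _) (gr_mem hN _)]; rfl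
  set r := bobR vB (cutSt N s) ch with hrdef
  push Not at hterm
  obtain ⟨hiN, hjN⟩ := hterm
  have hnt : ¬ (N < s.i ∨ N < s.j) := by omega
  have hamul : ((s.a + 1 : ℕ) : ℝ) * ε = s.a * ε + ε := by push_cast; ring
  have hbmul : ((s.b + 1 : ℕ) : ℝ) * ε = s.b * ε + ε := by push_cast; ring
  cases ch
  · -- Bob takes the middle
    have hlie : Dg vB N s.i s.j ≤ 1 / 2 - ε / 2 → ((s.a + 1 : ℕ) : ℝ) * ε ≤ R + r := by
      intro hD
      have hm : max 0 (Dg vB N s.i s.j) ≤ 1 / 2 - ε / 2 := max_le (by linarith) hD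
      have := hI.lieA hD
      have h3 := le_max_left (1 - max 0 (Dg vB N s.i s.j)) (max 0 (Dg vB N s.i s.j))
      simp only [Bool.false_eq_true, if_false] at hbob
      rw [hamul]; linarith
    by_cases ha : s.a + 1 < M
    · rw [show stepSt vA N M s false = ⟨s.i, s.j, s.a + 1, s.b, s.best⟩ by
        simp [stepSt, hnt, ha]]
      exact { hI with
        hR0 := hR0
        ha := ha
        lieA := hlie
        lieB := fun h => (hI.lieB h).trans (by linarith) }
    · rw [show stepSt vA N M s false =
          ⟨s.i + 1, s.j, 0, 0, better vA s.best (candMid N s.i s.j)⟩ by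
        simp [stepSt, hnt, ha]]
      have haM : s.a + 1 = M := by have := hI.ha; omega
      have hD : 1 / 2 - ε / 2 ≤ Dg vB N s.i s.j := by
        by_contra hcon
        have := hlie (not_le.mp hcon).le
        rw [haM] at this
        linarith
      refine ⟨hR0, by simp; omega, hI.hj, by simp; have := hI.ha; omega, by simp; have := hI.ha; omega,
        ?_, Or.inr hD, ?_, ?_, ?_, ?_, ?_, ?_⟩
      · exact (Dg_anti_left hδ hB hN _ (Nat.le_succ _)).trans hI.low
      · intro i' hi'
        simp only at hi'
        rcases Nat.lt_succ_iff_lt_or_eq.mp hi' with h | rfl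
        · obtain ⟨j', h1, h2⟩ := hI.recMid i' h
          exact ⟨j', h1, h2.trans (better_left _ _ _)⟩
        · exact ⟨s.j, hI.low, better_right _ _ _⟩
      · intro j' hj'
        obtain ⟨i', h1, h2⟩ := hI.recOut j' hj'
        exact ⟨i', h1, h2.trans (better_left _ _ _)⟩
      · exact better_ind (fun o => ValidCuts 2 o.1) _ _ _ hI.valid
          (mk2_valid (gr_mem hN _) (gr_mem hN _))
      · exact better_ind (fun o => 1 / 2 + ε / 2 ≤ pieceVal vB (altPiece 2 o.1 o.2)) _ _ _
          hI.safe (candMid_safe hδ hB hN hε1 hD)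
      · intro _; simpa using hR0
      · intro _; simpa using hR0
  · -- Bob takes the outer piece
    have hlie : 1 / 2 + ε / 2 ≤ Dg vB N s.i s.j → ((s.b + 1 : ℕ) : ℝ) * ε ≤ R + r := by
      intro hD
      have hm : 1 / 2 + ε / 2 ≤ max 0 (Dg vB N s.i s.j) := le_max_of_le_right hD
      have := hI.lieB hD
      have h3 := le_max_right (1 - max 0 (Dg vB N s.i s.j)) (max 0 (Dg vB N s.i s.j))
      simp only [if_true] at hbob
      rw [hbmul]; linarith
    by_cases hb : s.b + 1 < M
    · rw [show stepSt vA N M s true = ⟨s.i, s.j, s.a, s.b + 1, s.best⟩ by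
        simp [stepSt, hnt, hb]]
      exact { hI with
        hR0 := hR0
        hb := hb
        lieA := fun h => (hI.lieA h).trans (by linarith)
        lieB := hlie }
    · rw [show stepSt vA N M s true =
          ⟨s.i, s.j + 1, 0, 0, better vA s.best (candOut N s.i s.j)⟩ by
        simp [stepSt, hnt, hb]]
      have hbM : s.b + 1 = M := by have := hI.hb; omega
      have hD : Dg vB N s.i s.j ≤ 1 / 2 + ε / 2 := by
        by_contra hcon
        have := hlie (not_le.mp hcon).le
        rw [hbM] at this
        linarith
      refine ⟨hR0, hI.hi, by simp; omega, by simp; have := hI.ha; omega,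
        by simp; have := hI.ha; omega, hD, ?_, ?_, ?_, ?_, ?_, ?_, ?_⟩
      · rcases hI.high with h | h
        · exact Or.inl h
        · exact Or.inr (h.trans (Dg_mono_right hδ hB hN _ (Nat.le_succ _)))
      · intro i' hi'
        obtain ⟨j', h1, h2⟩ := hI.recMid i' hi'
        exact ⟨j', h1, h2.trans (better_left _ _ _)⟩
      · intro j' hj'
        simp only at hj'
        rcases Nat.lt_succ_iff_lt_or_eq.mp hj' with h | rfl
        · obtain ⟨i', h1, h2⟩ := hI.recOut j' h
          exact ⟨i', h1, h2.trans (better_left _ _ _)⟩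
        · exact ⟨s.i, hI.high, better_right _ _ _⟩
      · exact better_ind (fun o => ValidCuts 2 o.1) _ _ _ hI.valid
          (mk2_valid (gr_mem hN _) (gr_mem hN _))
      · exact better_ind (fun o => 1 / 2 + ε / 2 ≤ pieceVal vB (altPiece 2 o.1 o.2)) _ _ _
          hI.safe (candOut_safe hδ hB hN hε1 hjN hD)
      · intro _; simpa using hR0
      · intro _; simpa using hR0

lemma gr_pred_le (N n : ℕ) : gr N n ≤ gr N (n - 1) + 1 / N := by
  cases n with
  | zero => simp
  | succ n => exact gr_succ_le

lemma cumVal_lip {v : ℝ → ℝ} (hδ : 0 < δ) (hδΔ : δ ≤ Δ) (h : IsValueDensity δ Δ v) {x y e : ℝ}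
    (hx : x ∈ Icc (0:ℝ) 1) (hy : y ∈ Icc (0:ℝ) 1) (he : 0 ≤ e) (hxy : x ≤ y + e) :
    cumVal v x ≤ cumVal v y + Δ * e := by
  have hΔ : 0 < Δ := by linarith
  rcases le_total x y with hl | hl
  · have := cumVal_mono hδ h hx.1 hl hy.2
    have : 0 ≤ Δ * e := by positivity
    linarith
  · have := cumVal_upper h hy.1 hl hx.2
    have : Δ * (x - y) ≤ Δ * e := mul_le_mul_of_nonneg_left (by linarith) hΔ.le
    linarith

lemma cumVal_inv {v : ℝ → ℝ} (hδ : 0 < δ) (h : IsValueDensity δ Δ v) {x y e : ℝ}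
    (hx : x ∈ Icc (0:ℝ) 1) (hy : y ∈ Icc (0:ℝ) 1) (he : 0 ≤ e)
    (hxy : cumVal v x ≤ cumVal v y + δ * e) : x ≤ y + e := by
  rcases le_total x y with hl | hl
  · linarith
  · have := cumVal_lower h hy.1 hl hx.2
    have : x - y ≤ e := le_of_mul_le_mul_left (by linarith) hδ
    linarith

lemma term_opt (hδ : 0 < δ) (hδΔ : δ ≤ Δ) (hA : IsValueDensity δ Δ vA)
    (hB : IsValueDensity δ Δ vB) (hN : 0 < N) (hε1 : δ / N < 1) (s : St) (R : ℝ)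
    (hI : PInv vA vB (δ / N) N M s R) (ht : N < s.i ∨ N < s.j) (c : Fin 2 → ℝ) (b : Bool)
    (hc : ValidCuts 2 c) (hh : 1 / 2 ≤ pieceVal vB (altPiece 2 c (!b))) :
    pieceVal vA (altPiece 2 c b) ≤ offVal vA s.best + 6 * Δ / N := by
  have hNr : (0:ℝ) < N := by exact_mod_cast hN
  have hε : 0 < δ / N := by positivity
  have hΔ : 0 < Δ := by linarith
  have hm : (0:ℝ) < 1 / N := by positivity
  have hE : δ / N = δ * (1 / N) := by ring
  have hE6 : 6 * Δ / N = 6 * (Δ * (1 / N)) := by ring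
  have hΔm : 0 < Δ * (1 / N) := by positivity
  rw [hE] at hI hε1 hε
  rw [hE6]
  set m : ℝ := 1 / N with hmdef
  have hj : s.j = N + 1 := by
    by_contra hne
    have hjN : ¬ N < s.j := by have := hI.hj; omega
    have hi : N < s.i := by tauto
    have hi' : s.i = N + 1 := by have := hI.hi; omega
    rcases hI.high with h | h
    · omega
    · rw [hi', Dg, Nat.add_sub_cancel, gr_of_ge hN le_rfl, cumVal_one hB] at h
      have := cumVal_mono hδ hB (gr_mem hN s.j).1 (gr_mem hN s.j).2 le_rfl
      rw [cumVal_one hB] at this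
      linarith
  have hlow := hI.low
  rw [hj, Nat.add_sub_cancel] at hlow
  have hx := hc.2 0
  have hy := hc.2 1
  cases b
  · -- Alice gets the middle
    simp only [Bool.not_false] at hh
    rw [piece_true hB hc] at hh
    rw [piece_false hA hc]
    have hfl : ((⌊(N:ℝ) * c 1⌋₊ : ℕ) : ℝ) ≤ N * c 1 := Nat.floor_le (mul_nonneg hNr.le hy.1)
    have hfl2 : (N:ℝ) * c 1 < ⌊(N:ℝ) * c 1⌋₊ + 1 := Nat.lt_floor_add_one _
    set j0 := ⌊(N:ℝ) * c 1⌋₊ with hj0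
    have hj0N : j0 ≤ N := by
      have : (j0:ℝ) ≤ N := hfl.trans (by nlinarith [hy.2])
      exact_mod_cast this
    have hg1 : gr N j0 ≤ c 1 := by
      rw [gr_of_le hj0N, div_le_iff₀ hNr]; linarith
    have hg2 : c 1 ≤ gr N j0 + m := by
      rw [gr_of_le hj0N, hmdef, ← add_div, le_div_iff₀ hNr]; linarith
    have hg3 := gr_pred_le N j0
    obtain ⟨i', h1, h2⟩ := hI.recOut j0 (by omega)
    have hi' : gr N i' ≤ c 0 + 3 / 2 * m := by
      rcases h1 with h1 | h1
      · rw [h1, gr_zero]; linarith [hx.1]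
      · have h4 := gr_pred_le N i'
        have h5 : gr N (i' - 1) ≤ c 0 + m / 2 := by
          refine cumVal_inv hδ hB (gr_mem hN _) hx (by positivity) ?_
          unfold Dg at h1
          have := cumVal_mono hδ hB (gr_mem hN j0).1 hg1 hy.2
          linarith
        linarith
    have l1 := cumVal_lip hδ hδΔ hA (e := 2 * m) hy (gr_mem hN (j0 - 1)) (by positivity)
      (by linarith)
    have l2 := cumVal_lip hδ hδΔ hA (e := 3 / 2 * m) (gr_mem hN i') hx (by positivity) hi'
    have hval : offVal vA (candOut N i' j0) =
        max 0 (cumVal vA (gr N (j0 - 1)) - cumVal vA (gr N i')) := by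
      rw [offVal, candOut]
      simp only [Bool.not_true]
      rw [piece_false hA (mk2_valid (gr_mem hN _) (gr_mem hN _)),
        mid_mk2 hδ hA (gr_mem hN _) (gr_mem hN _)]
    have h6 := le_max_right 0 (cumVal vA (gr N (j0 - 1)) - cumVal vA (gr N i'))
    rw [hval] at h2
    linarith
  · -- Alice gets the outer piece
    simp only [Bool.not_true] at hh
    rw [piece_false hB hc] at hh
    rw [piece_true hA hc]
    have hfl : ((⌊(N:ℝ) * c 0⌋₊ : ℕ) : ℝ) ≤ N * c 0 := Nat.floor_le (mul_nonneg hNr.le hx.1)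
    have hfl2 : (N:ℝ) * c 0 < ⌊(N:ℝ) * c 0⌋₊ + 1 := Nat.lt_floor_add_one _
    set f := ⌊(N:ℝ) * c 0⌋₊ with hf
    have hfN : f ≤ N := by
      have : (f:ℝ) ≤ N := hfl.trans (by nlinarith [hx.2])
      exact_mod_cast this
    have hg1 : gr N f ≤ c 0 := by
      rw [gr_of_le hfN, div_le_iff₀ hNr]; linarith
    have hg2 : c 0 ≤ gr N f + m := by
      rw [gr_of_le hfN, hmdef, ← add_div, le_div_iff₀ hNr]; linarith
    have hg3 := gr_pred_le N f
    have hg4 := gr_pred_le N (f - 1)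
    have hg5 := gr_mono N (Nat.sub_le f 1)
    have hg6 := gr_mono N (Nat.sub_le (f - 1) 1)
    have hD : 1 / 2 + (δ * m) / 2 < Dg vB N (f - 1) N := by
      rw [Dg, gr_of_ge hN le_rfl, cumVal_one hB]
      rcases Nat.eq_zero_or_pos f with h0 | h0
      · rw [h0, Nat.zero_sub, gr_zero, cumVal_zero]; linarith
      · have g1 := gain hB hN (n := f - 1) (by omega)
        rw [Nat.sub_add_cancel h0, hE] at g1
        have g2 := cumVal_mono hδ hB (gr_mem hN f).1 hg1 hx.2
        have g3 := cumVal_mono hδ hB hy.1 hy.2 le_rfl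
        rw [cumVal_one hB] at g3
        linarith
    have hlt : f - 1 < s.i := by
      by_contra hcon
      have := Dg_anti_left hδ hB hN N (not_lt.mp hcon)
      linarith
    obtain ⟨j', h1, h2⟩ := hI.recMid _ hlt
    have h4 := gr_pred_le N j'
    have h4' := gr_succ_le (N := N) (n := j')
    have h5 : gr N (j' - 1) ≤ c 1 + m / 2 := by
      refine cumVal_inv hδ hB (gr_mem hN _) hy (by positivity) ?_
      unfold Dg at h1
      have := cumVal_mono hδ hB (gr_mem hN (f - 1)).1 (hg5.trans hg1) hx.2
      linarith
    have l1 := cumVal_lip hδ hδΔ hA (e := 3 * m) hx (gr_mem hN (f - 1 - 1)) (by positivity)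
      (by linarith)
    have l2 := cumVal_lip hδ hδΔ hA (e := 5 / 2 * m) (gr_mem hN (j' + 1)) hy (by positivity)
      (by linarith)
    have hval : offVal vA (candMid N (f - 1) j') =
        1 - max 0 (cumVal vA (gr N (j' + 1)) - cumVal vA (gr N (f - 1 - 1))) := by
      rw [offVal, candMid]
      simp only [Bool.not_false]
      rw [piece_true hA (mk2_valid (gr_mem hN _) (gr_mem hN _)),
        mid_mk2 hδ hA (gr_mem hN _) (gr_mem hN _)]
    have hmb := (mid_bounds hδ hA hc).1
    have h6 : max 0 (cumVal vA (gr N (j' + 1)) - cumVal vA (gr N (f - 1 - 1))) ≤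
        cumVal vA (c 1) - cumVal vA (c 0) + 6 * (Δ * m) := max_le (by linarith) (by linarith)
    rw [hval] at h2
    linarith

lemma stack_le_one (hδ : 0 < δ) (hA : IsValueDensity δ Δ vA) : stackelbergValue 2 vA vB ≤ 1 := by
  refine Real.sSup_le ?_ zero_le_one
  rintro u ⟨c, b, hc, -, rfl⟩
  exact (piece_bounds hδ hA hc b).2

/-- Potential counting exploration rounds. -/
def pot (M : ℕ) (s : St) : ℕ := 2 * M * (s.i + s.j) + s.a + s.b

lemma round_loss (hδ : 0 < δ) (hδΔ : δ ≤ Δ) (hA : IsValueDensity δ Δ vA)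
    (hB : IsValueDensity δ Δ vB) (hN : 0 < N) (hε1 : δ / N < 1) (s : St) (R : ℝ)
    (hI : PInv vA vB (δ / N) N M s R) (ch : Bool) :
    stackelbergValue 2 vA vB - pieceVal vA (altPiece 2 (cutSt N s) (!ch)) ≤
      (pot M (stepSt vA N M s ch) : ℝ) - pot M s + 6 * Δ / N +
        bobR vB (cutSt N s) ch / (δ / N) := by
  have hNr : (0:ℝ) < N := by exact_mod_cast hN
  have hε : 0 < δ / N := by positivity
  have hΔ : 0 < Δ := by linarith
  have h1 := stack_le_one (vB := vB) hδ hA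
  have h2 := (piece_bounds hδ hA (cut_valid hN s hI.valid) (!ch)).1
  have h3 : 0 ≤ bobR vB (cutSt N s) ch / (δ / N) := div_nonneg (bobR_nonneg _ _ _) hε.le
  have h4 : 0 < 6 * Δ / N := by positivity
  by_cases ht : N < s.i ∨ N < s.j
  · have hs : stepSt vA N M s ch = s := by simp [stepSt, ht]
    rw [hs]
    have hcut : cutSt N s = s.best.1 := by simp [cutSt, ht]
    by_cases hch : ch = s.best.2
    · have : stackelbergValue 2 vA vB ≤ offVal vA s.best + 6 * Δ / N := by
        refine Real.sSup_le ?_ ?_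
        · rintro u ⟨c, b, hc, hh, rfl⟩
          exact term_opt hδ hδΔ hA hB hN hε1 s R hI ht c b hc hh
        · have := (piece_bounds hδ hA hI.valid (!s.best.2)).1
          unfold offVal; linarith
      rw [offVal, ← hcut, ← hch] at this
      linarith
    · have : δ / N ≤ bobR vB (cutSt N s) ch := by
        have hsafe := hI.safe
        rw [hcut, bobR]
        rw [piece_true hB hI.valid, piece_false hB hI.valid]
        have m1 := le_max_left (1 - (cumVal vB (s.best.1 1) - cumVal vB (s.best.1 0)))
          (cumVal vB (s.best.1 1) - cumVal vB (s.best.1 0))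
        have m2 := le_max_right (1 - (cumVal vB (s.best.1 1) - cumVal vB (s.best.1 0)))
          (cumVal vB (s.best.1 1) - cumVal vB (s.best.1 0))
        cases ch
        · have : s.best.2 = true := by simpa using Ne.symm hch
          rw [this, piece_true hB hI.valid] at hsafe
          rw [piece_false hB hI.valid]; linarith
        · have : s.best.2 = false := by simpa using Ne.symm hch
          rw [this, piece_false hB hI.valid] at hsafe
          rw [piece_true hB hI.valid]; linarith
      have : 1 ≤ bobR vB (cutSt N s) ch / (δ / N) := by rwa [one_le_div hε]
      linarith
  · have : pot M s + 1 ≤ pot M (stepSt vA N M s ch) := by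
      have ha := hI.ha
      have hb := hI.hb
      unfold stepSt pot
      split_ifs
      · simp only; omega
      · simp only; nlinarith
      · simp only; omega
      · simp only; nlinarith
    have : (pot M s : ℝ) + 1 ≤ pot M (stepSt vA N M s ch) := by exact_mod_cast this
    linarith

lemma pot_le (ε : ℝ) (s : St) (R : ℝ) (hI : PInv vA vB ε N M s R) :
    pot M s ≤ 2 * M * (2 * N + 3) := by
  have := hI.hi
  have := hI.hj
  have := hI.ha
  have := hI.hb
  unfold pot
  nlinarith [Nat.mul_le_mul_left (2 * M) (show s.i + s.j ≤ 2 * N + 2 by omega)]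

end

lemma regret_bound {δ Δ : ℝ} {vA vB : ℝ → ℝ} (hδ : 0 < δ) (hδΔ : δ ≤ Δ)
    (hA : IsValueDensity δ Δ vA) (hB : IsValueDensity δ Δ vB) (N M : ℕ → ℕ) (SB : BobStrategy 2)
    (T : ℕ) (hN : 0 < N T) (hM : 0 < M T) (hε1 : δ / N T < 1) (B : ℝ)
    (hbob : bobRegret 2 vB (stratN vA N M) SB T ≤ B) (hBM : B < M T * (δ / N T)) :
    aliceRegret 2 vA vB (stratN vA N M) SB T ≤
      2 * M T * (2 * N T + 3) + T * (6 * Δ / N T) + B / (δ / N T) := by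
  have hNr : (0:ℝ) < N T := by exact_mod_cast hN
  have hε : 0 < δ / N T := by positivity
  set s : ℕ → St := fun t => histSt vA (N T) (M T) (playHist 2 (stratN vA N M) SB T t) with hs
  set ch : ℕ → Bool := fun t => roundChoice 2 (stratN vA N M) SB T t with hch
  have hs0 : s 0 = initSt := rfl
  have hcut : ∀ t, roundCuts 2 (stratN vA N M) SB T t = cutSt (N T) (s t) := fun t => rfl
  have hss : ∀ t, s (t + 1) = stepSt vA (N T) (M T) (s t) (ch t) := by
    intro t
    simp only [hs, playHist, histSt, List.foldl_append]
    rfl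
  set r : ℕ → ℝ := fun t => bobR vB (cutSt (N T) (s t)) (ch t) with hr
  have hr0 : ∀ t, 0 ≤ r t := fun t => bobR_nonneg _ _ _
  have hreg : bobRegret 2 vB (stratN vA N M) SB T = ∑ t ∈ Finset.range T, r t := rfl
  have hRT : ∀ t ≤ T, ∑ u ∈ Finset.range t, r u ≤ B := by
    intro t ht
    refine le_trans ?_ (hreg ▸ hbob)
    exact Finset.sum_le_sum_of_subset_of_nonneg (Finset.range_mono ht) (fun i _ _ => hr0 i)
  have hInv : ∀ t ≤ T, PInv vA vB (δ / N T) (N T) (M T) (s t) (∑ u ∈ Finset.range t, r u) := by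
    intro t
    induction t with
    | zero =>
      intro _
      rw [hs0, Finset.sum_range_zero]
      exact inv_init hδ hB hN hM hε1
    | succ t ih =>
      intro ht
      rw [hss, Finset.sum_range_succ]
      refine inv_step hδ hB hN hε1 _ _ _ (ih (by omega)) ?_
      have := hRT (t + 1) ht
      rw [Finset.sum_range_succ] at this
      exact lt_of_le_of_lt this hBM
  have hsum : aliceRegret 2 vA vB (stratN vA N M) SB T ≤
      ∑ t ∈ Finset.range T, (((pot (M T) (s (t + 1)) : ℝ) - pot (M T) (s t)) + 6 * Δ / N T +
        r t / (δ / N T)) := by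
    refine Finset.sum_le_sum fun t ht => ?_
    have ht' := Finset.mem_range.mp ht
    rw [hss, hcut]
    exact round_loss hδ hδΔ hA hB hN hε1 _ _ (hInv t ht'.le) (ch t)
  refine hsum.trans ?_
  rw [Finset.sum_add_distrib, Finset.sum_add_distrib,
    Finset.sum_range_sub (fun t => (pot (M T) (s t) : ℝ))]
  have h1 : (pot (M T) (s T) : ℝ) ≤ 2 * M T * (2 * N T + 3) := by
    exact_mod_cast pot_le _ _ _ (hInv T le_rfl)
  have h2 : (0:ℝ) ≤ pot (M T) (s 0) := by positivity
  have h3 := div_le_div_of_nonneg_right (hRT T le_rfl) hε.le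
  rw [Finset.sum_div] at h3
  simp only [Finset.sum_const, Finset.card_range, nsmul_eq_mul]
  linarith

/-- 2 cuts, non-myopic Bob with public learning rate, upper bound:
for `α ∈ (-1/2, 1)`, for every Alice value density there is a deterministic Alice strategy
(depending on `α` but not on `c`) such that for every `c > 0` there are `C > 0` and `T₀`
with: against every Bob value density and every Bob strategy guaranteeing regret at most
`c·T'^α` for all horizons, Alice's Stackelberg regret over any horizon `T ≥ T₀` is at most
`C·T^{(2+α)/3}·(log T)^{2/3}`. -/
theorem two_cut_public_rate_upper (δ Δ : ℝ) (hδ : 0 < δ) (hδΔ : δ ≤ Δ)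
    (α : ℝ) (hα₁ : -(1/2 : ℝ) < α) (hα₂ : α < 1) :
    ∀ vA : ℝ → ℝ, IsValueDensity δ Δ vA →
      ∃ SA : AliceStrategy 2, AliceValid 2 SA ∧
        ∀ c : ℝ, 0 < c →
          ∃ (C : ℝ) (T₀ : ℕ), 0 < C ∧
            ∀ vB : ℝ → ℝ, IsValueDensity δ Δ vB →
              ∀ SB : BobStrategy 2,
                BobGuarantees 2 vB SB (fun T' => c * (T' : ℝ) ^ α) →
                ∀ T : ℕ, T₀ ≤ T →
                  aliceRegret 2 vA vB SA SB T ≤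
                    C * (T : ℝ) ^ ((2 + α) / 3) * Real.log T ^ ((2 : ℝ) / 3) := by
  intro vA hA
  set N : ℕ → ℕ := fun T => ⌊(T:ℝ) ^ ((1 - α) / 3)⌋₊ + 1 with hNdef
  set M : ℕ → ℕ := fun T => ⌊(T:ℝ) ^ α * N T * Real.log T ^ ((2:ℝ) / 3)⌋₊ + 1 with hMdef
  refine ⟨stratN vA N M, strat_valid vA N M (fun T => Nat.succ_pos _), ?_⟩
  intro c hc
  have hΔ : 0 < Δ := by linarith
  have htend : Filter.Tendsto (fun T : ℕ => Real.log T ^ ((2:ℝ) / 3)) Filter.atTop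
      Filter.atTop :=
    (tendsto_rpow_atTop (by norm_num)).comp
      (Real.tendsto_log_atTop.comp tendsto_natCast_atTop_atTop)
  obtain ⟨T₁, hT₁⟩ := Filter.eventually_atTop.mp
    (htend.eventually (Filter.eventually_ge_atTop (max 1 (c / δ))))
  refine ⟨60 + 6 * Δ + 2 * c / δ, max T₁ 1, by positivity, ?_⟩
  intro vB hB SB hbob T hT
  have hTT : T₁ ≤ T := le_trans (le_max_left _ _) hT
  have hT1 : 1 ≤ T := le_trans (le_max_right _ _) hT
  have hTr : (1:ℝ) ≤ T := by exact_mod_cast hT1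
  have hT0 : (0:ℝ) < T := by linarith
  have hL := hT₁ T hTT
  have hMT : M T = ⌊(T:ℝ) ^ α * N T * Real.log T ^ ((2:ℝ) / 3)⌋₊ + 1 := rfl
  have hNT : N T = ⌊(T:ℝ) ^ ((1 - α) / 3)⌋₊ + 1 := rfl
  have hY1 : (T:ℝ) ^ α * (T:ℝ) ^ ((1 - α) / 3) * (T:ℝ) ^ ((1 - α) / 3) =
      (T:ℝ) ^ ((2 + α) / 3) := by
    rw [← Real.rpow_add hT0, ← Real.rpow_add hT0]; congr 1; ring
  have hY2 : (T:ℝ) ^ ((2 + α) / 3) * (T:ℝ) ^ ((1 - α) / 3) = T := by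
    rw [← Real.rpow_add hT0, show (2 + α) / 3 + (1 - α) / 3 = 1 by ring, Real.rpow_one]
  have hXY : (T:ℝ) ^ ((1 - α) / 3) ≤ (T:ℝ) ^ ((2 + α) / 3) :=
    Real.rpow_le_rpow_of_exponent_le hTr (by linarith)
  have hX1 : 1 ≤ (T:ℝ) ^ ((1 - α) / 3) := Real.one_le_rpow hTr (by linarith)
  have hA0 : 0 < (T:ℝ) ^ α := Real.rpow_pos_of_pos hT0 _
  have hN1 : 0 < N T := Nat.succ_pos _
  have hM1 : 0 < M T := Nat.succ_pos _
  have hb := hbob (stratN vA N M) T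
  simp only at hb
  set L := Real.log T ^ ((2:ℝ) / 3) with hLdef
  set X := (T:ℝ) ^ ((1 - α) / 3) with hXdef
  set Y := (T:ℝ) ^ ((2 + α) / 3) with hYdef
  set A := (T:ℝ) ^ α with hAdef
  have hL1 : 1 ≤ L := le_trans (le_max_left _ _) hL
  have hLc : c / δ ≤ L := le_trans (le_max_right _ _) hL
  have hδ1 : δ ≤ 1 := by
    have := cumVal_lower hA le_rfl zero_le_one le_rfl
    rw [cumVal_one hA, cumVal_zero] at this
    linarith
  have hNX : X ≤ N T := by
    rw [hNT]; push_cast; exact (Nat.lt_floor_add_one X).le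
  have hNX2 : (N T : ℝ) ≤ 2 * X := by
    rw [hNT]; push_cast
    have := Nat.floor_le (show 0 ≤ X by linarith)
    linarith
  have hN2 : (2:ℝ) ≤ N T := by
    rw [hNT]; push_cast
    have : 1 ≤ ⌊X⌋₊ := Nat.le_floor (by simpa using hX1)
    have : (1:ℝ) ≤ ⌊X⌋₊ := by exact_mod_cast this
    linarith
  have hMl : A * N T * L < M T := by
    rw [hMT]; push_cast; exact Nat.lt_floor_add_one _
  have hMu : (M T : ℝ) ≤ A * N T * L + 1 := by
    rw [hMT]; push_cast
    have := Nat.floor_le (show 0 ≤ A * N T * L by positivity)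
    linarith
  have hNr : (0:ℝ) < N T := by linarith
  have hY0 : 0 < Y := by linarith
  have hε1 : δ / N T < 1 := by rw [div_lt_one hNr]; linarith
  have hBM : c * A < M T * (δ / N T) := by
    have h1 : c ≤ L * δ := by rwa [div_le_iff₀ hδ] at hLc
    have h2 : A * N T * L * (δ / N T) < M T * (δ / N T) :=
      mul_lt_mul_of_pos_right hMl (by positivity)
    have h3 : A * N T * L * (δ / N T) = A * (L * δ) := by field_simp
    have h4 : A * c ≤ A * (L * δ) := mul_le_mul_of_nonneg_left h1 hA0.le
    linarith
  have key := regret_bound hδ hδΔ hA hB N M SB T hN1 hM1 hε1 (c * A) hb hBM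
  have hYL : Y ≤ Y * L := le_mul_of_one_le_right hY0.le hL1
  have p1 : (2:ℝ) * M T * (2 * N T + 3) ≤ 60 * (Y * L) := by
    have e1 : (2:ℝ) * M T * (2 * N T + 3) ≤ 2 * (A * N T * L + 1) * (5 * N T) := by
      gcongr
      linarith
    have e2 : A * N T * L * N T ≤ A * (2 * X) * L * (2 * X) := by gcongr
    have e3 : A * (2 * X) * L * (2 * X) = 4 * (Y * L) := by rw [← hY1]; ring
    nlinarith
  have p2 : (T:ℝ) * (6 * Δ / N T) ≤ 6 * Δ * (Y * L) := by
    have e1 : (T:ℝ) * (6 * Δ / N T) ≤ 6 * Δ * Y := by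
      rw [mul_div_assoc', div_le_iff₀ hNr]
      calc (T:ℝ) * (6 * Δ) = 6 * Δ * Y * X := by rw [← hY2]; ring
        _ ≤ 6 * Δ * Y * N T := by gcongr
    exact e1.trans (mul_le_mul_of_nonneg_left hYL (by positivity))
  have p3 : c * A / (δ / N T) ≤ 2 * c / δ * (Y * L) := by
    have e0 : A * X ≤ Y := by
      rw [← hY1]; exact le_mul_of_one_le_right (by positivity) hX1
    have e1 : c * A / (δ / N T) = c / δ * (A * N T) := by field_simp
    have e2 : A * N T ≤ 2 * (Y * L) := by
      have : A * N T ≤ A * (2 * X) := by gcongr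
      linarith
    rw [e1]
    calc c / δ * (A * N T) ≤ c / δ * (2 * (Y * L)) := by gcongr
      _ = _ := by ring
  calc _ ≤ _ := key
    _ ≤ 60 * (Y * L) + 6 * Δ * (Y * L) + 2 * c / δ * (Y * L) := by linarith
    _ = _ := by ring

end
end
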